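/- arXiv:0901.3646 — 10 statements merged into one kernel-verified Lean document; each statement's English description precedes it below -/
import Mathlib

section
/- A C*-algebra A (over ℂ, not necessarily unital, with A ≠ {0}) has the fixed point property for nonexpansive mappings if and only if A is finite dimensional (as a complex vector space), and both are equivalent to the condition that the spectrum of every self-adjoint element of A is finite. -/
/-- A complex Banach space `B` has the *fixed point property for nonexpansive mappings*
if every nonexpansive self-map of every nonempty bounded closed convex subset of `B`
has a fixed point.  (Convexity is expressed with real coefficients coerced into `ℂ`.) -/
def HasFPP (B : Type*) [NormedAddCommGroup B] [NormedSpace ℂ B] : Prop :=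
  ∀ K : Set B, K.Nonempty → Bornology.IsBounded K → IsClosed K →
    (∀ x ∈ K, ∀ y ∈ K, ∀ t : ℝ, 0 ≤ t → t ≤ 1 →
      ((1 - t : ℝ) : ℂ) • x + ((t : ℝ) : ℂ) • y ∈ K) →
    ∀ M : B → B, Set.MapsTo M K K →
      (∀ x ∈ K, ∀ y ∈ K, ‖M x - M y‖ ≤ ‖x - y‖) →
      ∃ x ∈ K, M x = x

open Filter Topology

theorem FiniteDimensional.hasFPP (B : Type*) [NormedAddCommGroup B] [NormedSpace ℂ B]
    [FiniteDimensional ℂ B] : HasFPP B := by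
  intro K hne hbdd hclosed hconv M hM hnonexp
  have : ProperSpace B := FiniteDimensional.proper ℂ B
  have hK : IsCompact K := Metric.isCompact_of_isClosed_isBounded hclosed hbdd
  have hMcont : ContinuousOn M K := by
    refine LipschitzOnWith.continuousOn (K := 1) (LipschitzOnWith.of_dist_le_mul fun x hx y hy ↦ ?_)
    simpa [dist_eq_norm] using hnonexp x hx y hy
  obtain ⟨x, hx, hmin⟩ :=
    hK.exists_isMinOn hne (f := fun x ↦ ‖M x - x‖) (hMcont.sub continuousOn_id).norm
  refine ⟨x, hx, ?_⟩
  obtain ⟨x₀, hx₀⟩ := hne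
  obtain ⟨C, hC⟩ := hbdd.exists_norm_le
  have approx : ∀ t : ℝ, 0 < t → t < 1 → ‖M x - x‖ ≤ t * (2 * C) := by
    intro t ht0 ht1
    have hmaps : Set.MapsTo (fun y ↦ ((1 - t : ℝ) : ℂ) • M y + (t : ℂ) • x₀) K K :=
      fun y hy ↦ hconv _ (hM hy) _ hx₀ t ht0.le ht1.le
    have hcontr : ContractingWith (1 - t).toNNReal (hmaps.restrict _ K K) := by
      refine ⟨by simpa using ht0, LipschitzWith.of_dist_le_mul fun y z ↦ ?_⟩
      have h1 := hnonexp y y.2 z z.2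
      rw [Subtype.dist_eq, Subtype.dist_eq, dist_eq_norm, dist_eq_norm]
      simp only [Set.MapsTo.val_restrict_apply, add_sub_add_right_eq_sub, ← smul_sub, norm_smul,
        Complex.norm_real, Real.norm_eq_abs, Real.coe_toNNReal _ (sub_nonneg.2 ht1.le),
        abs_of_nonneg (sub_nonneg.2 ht1.le)]
      exact mul_le_mul_of_nonneg_left h1 (sub_nonneg.2 ht1.le)
    obtain ⟨y, hy, hfix, -⟩ := hcontr.exists_fixedPoint' hK.isComplete hmaps hx₀ (edist_ne_top _ _)
    have hfix' : ((1 - t : ℝ) : ℂ) • M y + (t : ℂ) • x₀ = y := hfix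
    have key : M y - y = (t : ℂ) • (M y - x₀) := by
      nth_rewrite 2 [← hfix']
      push_cast
      module
    calc ‖M x - x‖ ≤ ‖M y - y‖ := hmin hy
      _ = t * ‖M y - x₀‖ := by
        rw [key, norm_smul, Complex.norm_real, Real.norm_of_nonneg ht0.le]
      _ ≤ t * (2 * C) := by
        gcongr
        linarith [norm_sub_le (M y) x₀, hC _ (hM hy), hC _ hx₀]
  have hlim : Tendsto (fun t : ℝ ↦ t * (2 * C)) (𝓝[>] 0) (𝓝 0) := by
    refine Tendsto.mono_left ?_ nhdsWithin_le_nhds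
    exact Continuous.tendsto' (by fun_prop) 0 0 (by simp)
  have hle : ‖M x - x‖ ≤ 0 := ge_of_tendsto hlim <| by
    filter_upwards [Ioo_mem_nhdsGT (zero_lt_one' ℝ)] with t ht using approx t ht.1 ht.2
  exact sub_eq_zero.1 (norm_le_zero_iff.1 hle)

section CStar

variable {A : Type*} [NonUnitalCStarAlgebra A]

open scoped ContinuousMapZero in
/-- If the spectrum of `a` accumulates at `l`, then with `h ≥ 0` vanishing exactly at `0` and `l`
the affine map `f ↦ h + (1 - h) f` on `{f | 0 ≤ f ≤ 1, f l = 0}` is nonexpansive without fixed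
points, since a fixed point would equal `1` away from `0` and `l`. -/
theorem HasFPP.finite_real_quasispectrum (hA : HasFPP A) {a : A} (ha : IsSelfAdjoint a) :
    (quasispectrum ℝ a).Finite := by
  by_contra hinf
  have : Infinite (quasispectrum ℝ a) := Set.infinite_coe_iff.2 hinf
  obtain ⟨l, hl⟩ := exists_nhds_ne_neBot (quasispectrum ℝ a)
  let Φ := cfcₙHom (R := ℝ) ha
  have hΦ : Isometry Φ := isometry_cfcₙHom a ha
  let h : C(quasispectrum ℝ a, ℝ)₀ :=
    ⟨⟨fun x ↦ min 1 (|(x : ℝ)| * |(x : ℝ) - l|), by fun_prop⟩, by simp⟩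
  have h_apply (x) : h x = min 1 (|(x : ℝ)| * |(x : ℝ) - l|) := rfl
  have h0 (x) : 0 ≤ h x := le_min zero_le_one (by positivity)
  have h1 (x) : h x ≤ 1 := min_le_left _ _
  let S : Set C(quasispectrum ℝ a, ℝ)₀ := {f | (∀ x, 0 ≤ f x ∧ f x ≤ 1) ∧ f l = 0}
  have hSclosed : IsClosed S := by
    have : S = (⋂ x, {f | 0 ≤ f x ∧ f x ≤ 1}) ∩ {f | f l = 0} := by
      ext; simp [S]
    rw [this]
    have hc (x) : Continuous fun f : C(quasispectrum ℝ a, ℝ)₀ ↦ f x := continuous_eval_const x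
    refine (isClosed_iInter fun x ↦ ?_).inter (isClosed_eq (hc l) continuous_const)
    exact (isClosed_le continuous_const (hc x)).inter (isClosed_le (hc x) continuous_const)
  have norm_le {f : C(quasispectrum ℝ a, ℝ)₀} {C : ℝ} (hC : 0 ≤ C) (hf : ∀ x, |f x| ≤ C) :
      ‖f‖ ≤ C := (ContinuousMap.norm_le (f : C(quasispectrum ℝ a, ℝ)) hC).2 hf
  have le_norm (f : C(quasispectrum ℝ a, ℝ)₀) (x) : |f x| ≤ ‖f‖ :=
    (f : C(quasispectrum ℝ a, ℝ)).norm_coe_le_norm x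
  have hnorm (f) : ‖Φ f‖ = ‖f‖ := norm_cfcₙHom a f ha
  have hbdd : Bornology.IsBounded (Φ '' S) := by
    refine isBounded_iff_forall_norm_le.2 ⟨1, ?_⟩
    rintro - ⟨f, hf, rfl⟩
    rw [hnorm]
    exact norm_le zero_le_one fun x ↦ abs_le.2 ⟨by linarith [(hf.1 x).1], (hf.1 x).2⟩
  have hconv : ∀ x ∈ Φ '' S, ∀ y ∈ Φ '' S, ∀ t : ℝ, 0 ≤ t → t ≤ 1 →
      ((1 - t : ℝ) : ℂ) • x + ((t : ℝ) : ℂ) • y ∈ Φ '' S := by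
    rintro - ⟨f, hf, rfl⟩ - ⟨g, hg, rfl⟩ t ht0 ht1
    refine ⟨(1 - t) • f + t • g, ⟨fun x ↦ ?_, by simp [hf.2, hg.2]⟩, ?_⟩
    · have hfx := hf.1 x
      have hgx := hg.1 x
      simp only [ContinuousMapZero.coe_add, ContinuousMapZero.coe_smul, Pi.add_apply,
        Pi.smul_apply, smul_eq_mul]
      constructor <;> nlinarith
    · rw [map_add, map_smul, map_smul, Complex.coe_smul, Complex.coe_smul]
  have hmaps : Set.MapsTo (fun x ↦ Φ h + x - Φ h * x) (Φ '' S) (Φ '' S) := by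
    rintro - ⟨f, hf, rfl⟩
    refine ⟨h + f - h * f, ⟨fun x ↦ ?_, by simp [hf.2, h_apply]⟩, by simp⟩
    simp only [ContinuousMapZero.coe_sub, ContinuousMapZero.coe_add, ContinuousMapZero.coe_mul,
      Pi.sub_apply, Pi.add_apply, Pi.mul_apply]
    have hfx := hf.1 x
    constructor <;> nlinarith [h0 x, h1 x]
  have hnonexp : ∀ x ∈ Φ '' S, ∀ y ∈ Φ '' S,
      ‖Φ h + x - Φ h * x - (Φ h + y - Φ h * y)‖ ≤ ‖x - y‖ := by
    rintro - ⟨f, hf, rfl⟩ - ⟨g, hg, rfl⟩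
    have : Φ h + Φ f - Φ h * Φ f - (Φ h + Φ g - Φ h * Φ g) = Φ ((f - g) - h * (f - g)) := by
      simp only [map_sub, map_mul, mul_sub]
      abel
    rw [this, ← map_sub, hnorm, hnorm]
    refine norm_le (norm_nonneg _) fun x ↦ ?_
    have : ((f - g) - h * (f - g)) x = (1 - h x) * (f - g) x := by
      simp only [ContinuousMapZero.coe_sub, ContinuousMapZero.coe_mul,
        Pi.sub_apply, Pi.mul_apply]
      ring
    rw [this, abs_mul, abs_of_nonneg (sub_nonneg.2 (h1 x))]
    exact (mul_le_of_le_one_left (abs_nonneg _) (by linarith [h0 x])).trans (le_norm _ x)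
  obtain ⟨-, ⟨f, hf, rfl⟩, hfix⟩ := hA (Φ '' S) ⟨_, 0, by simp [S], rfl⟩ hbdd
    (hΦ.isClosedEmbedding.isClosedMap _ hSclosed) hconv _ hmaps hnonexp
  have hfix' : h + f - h * f = f := hΦ.injective (by simpa using hfix)
  have hone (x) (hx0 : x ≠ 0) (hxl : x ≠ l) : f x = 1 := by
    have hx := DFunLike.congr_fun hfix' x
    simp only [ContinuousMapZero.coe_sub, ContinuousMapZero.coe_add, ContinuousMapZero.coe_mul,
      Pi.sub_apply, Pi.add_apply, Pi.mul_apply] at hx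
    have hpos : 0 < h x := by
      refine lt_min one_pos (mul_pos (abs_pos.2 ?_) (abs_pos.2 (sub_ne_zero.2 ?_)))
      · exact fun h ↦ hx0 (Subtype.ext h)
      · exact fun h ↦ hxl (Subtype.ext h)
    have : h x * (1 - f x) = 0 := by linarith
    rcases mul_eq_zero.1 this with h' | h' <;> linarith
  have hev : ∀ᶠ x in 𝓝[≠] l, x ≠ 0 := by
    by_cases hl0 : l = 0
    · rw [hl0]; exact self_mem_nhdsWithin
    · exact nhdsWithin_le_nhds (isOpen_ne.mem_nhds hl0)
  have ht : Tendsto f (𝓝[≠] l) (𝓝 0) := by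
    have := (map_continuous f).tendsto l
    rw [hf.2] at this
    exact this.mono_left nhdsWithin_le_nhds
  have ht1 : Tendsto f (𝓝[≠] l) (𝓝 1) := by
    refine tendsto_const_nhds.congr' ?_
    filter_upwards [hev, self_mem_nhdsWithin] with x hx0 hxl using (hone x hx0 hxl).symm
  exact zero_ne_one (tendsto_nhds_unique ht ht1)

theorem IsSelfAdjoint.finite_quasispectrum_iff {a : A} (ha : IsSelfAdjoint a) :
    (quasispectrum ℂ a).Finite ↔ (quasispectrum ℝ a).Finite := by
  rw [← ha.quasispectrumRestricts.algebraMap_image]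
  exact Set.finite_image_iff (Complex.ofReal_injective.injOn)

theorem mem_quasispectrum_of_mul_eq_smul {a p : A} {r : ℝ} (hp : p ≠ 0) (h : a * p = r • p) :
    r ∈ quasispectrum ℝ a := by
  rw [Unitization.quasispectrum_eq_spectrum_inr' ℝ ℂ, spectrum.mem_iff]
  intro hu
  refine hp (Unitization.inr_injective (R := ℂ) (hu.mul_left_cancel ?_))
  rw [Unitization.inr_zero, mul_zero, sub_mul, ← Unitization.inr_mul, h,
    Algebra.algebraMap_eq_smul_one, smul_mul_assoc, one_mul, Unitization.inr_smul, sub_self]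

theorem IsStarProjection.mul_eq_zero_comm {p q : A} (hp : IsStarProjection p)
    (hq : IsStarProjection q) (h : p * q = 0) : q * p = 0 := by
  simpa [hp.isSelfAdjoint.star_eq, hq.isSelfAdjoint.star_eq] using congr(star $h)

/-- If all self-adjoint elements have finite spectrum, there is no infinite sequence of pairwise
orthogonal nonzero projections: `∑ 2⁻ⁿ pₙ` would have every `2⁻ⁿ` in its spectrum. -/
theorem not_exists_orthogonal_seq_of_finite_quasispectrum
    (hA : ∀ a : A, IsSelfAdjoint a → (quasispectrum ℝ a).Finite)
    (p : ℕ → A) (hp : ∀ n, IsStarProjection (p n)) (hne : ∀ n, p n ≠ 0)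
    (horth : ∀ m n, m < n → p m * p n = 0) : False := by
  have horth' (m n : ℕ) (hmn : m ≠ n) : p m * p n = 0 := by
    rcases hmn.lt_or_gt with h | h
    · exact horth m n h
    · exact (hp n).mul_eq_zero_comm (hp m) (horth n m h)
  have hsum : Summable fun n ↦ (1 / 2 : ℝ) ^ n • p n := by
    refine Summable.of_norm_bounded summable_geometric_two fun n ↦ ?_
    rw [norm_smul, Real.norm_of_nonneg (by positivity)]
    exact mul_le_of_le_one_right (by positivity) ((hp n).norm_le)
  have hsa : IsSelfAdjoint (∑' n, (1 / 2 : ℝ) ^ n • p n) := by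
    rw [IsSelfAdjoint, tsum_star]
    exact tsum_congr fun n ↦ by rw [star_smul, (hp n).isSelfAdjoint.star_eq, star_trivial]
  refine Set.infinite_of_injective_forall_mem (f := fun n : ℕ ↦ (1 / 2 : ℝ) ^ n)
    (pow_right_injective₀ (by norm_num) (by norm_num)) (fun n ↦ ?_) (hA _ hsa)
  refine mem_quasispectrum_of_mul_eq_smul (hne n) ?_
  rw [← hsum.tsum_mul_right, tsum_eq_single n]
  · rw [smul_mul_assoc, (hp n).isIdempotentElem.eq]
  · intro m hm
    rw [smul_mul_assoc, horth' m n hm, smul_zero]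

theorem IsSelfAdjoint.exists_spectral_projection {y : A} (hy : IsSelfAdjoint y)
    (hfin : (quasispectrum ℝ y).Finite) (hne : y ≠ 0) :
    ∃ (f : A) (r : ℝ), IsStarProjection f ∧ f ≠ 0 ∧ r ≠ 0 ∧ y * f = r • f := by
  obtain ⟨r, hr, hr0⟩ : ∃ r ∈ quasispectrum ℝ y, r ≠ 0 := by
    by_contra! h
    refine hne ?_
    rw [← cfcₙ_id ℝ y, ← cfcₙ_zero ℝ y]
    exact cfcₙ_congr fun x hx ↦ h x hx
  let g : ℝ → ℝ := fun x ↦ if x = r then 1 else 0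
  have hg : ContinuousOn g (quasispectrum ℝ y) := hfin.continuousOn g
  have hg0 : g 0 = 0 := by simp [g, hr0.symm]
  refine ⟨cfcₙ g y, r, ⟨?_, cfcₙ_predicate g y⟩, fun h ↦ ?_, hr0, ?_⟩
  · rw [IsIdempotentElem, ← cfcₙ_mul g g y hg hg0 hg hg0]
    exact cfcₙ_congr fun x _ ↦ by simp [g]
  · rw [← cfcₙ_zero ℝ y] at h
    have := eqOn_of_cfcₙ_eq_cfcₙ h hy hg hg0 continuousOn_const rfl hr
    simp [g] at this
  · nth_rewrite 1 [← cfcₙ_id ℝ y]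
    rw [← cfcₙ_mul id g y continuousOn_id rfl hg hg0, ← cfcₙ_smul r g y hg hg0]
    refine cfcₙ_congr fun x _ ↦ ?_
    by_cases hx : x = r <;> simp [g, hx]

/-- A nonzero projection dominating no other nonzero projection. -/
structure IsMinimalProjection (e : A) : Prop where
  isStarProjection : IsStarProjection e
  ne_zero : e ≠ 0
  eq_of_mul_eq : ∀ f, IsStarProjection f → f ≠ 0 → e * f = f → f = e

theorem IsStarProjection.exists_isMinimalProjection
    (hA : ∀ a : A, IsSelfAdjoint a → (quasispectrum ℝ a).Finite)
    {f : A} (hf : IsStarProjection f) (hf0 : f ≠ 0) :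
    ∃ e, IsMinimalProjection e ∧ f * e = e := by
  by_contra! hno
  let T := {g : A // IsStarProjection g ∧ g ≠ 0 ∧ f * g = g}
  have step (g : T) : ∃ g' : T, g.1 * g'.1 = g'.1 ∧ g'.1 ≠ g.1 := by
    obtain ⟨g, hg, hg0, hfg⟩ := g
    by_contra! h
    refine hno g ⟨hg, hg0, fun g' hg' hg'0 hgg' ↦ ?_⟩ hfg
    exact h ⟨g', hg', hg'0, by rw [← hgg', ← mul_assoc, hfg]⟩ hgg'
  choose next hnext hnext_ne using step
  let u : ℕ → T := fun n ↦ next^[n] ⟨f, hf, hf0, hf.isIdempotentElem⟩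
  have hu (n : ℕ) : u (n + 1) = next (u n) := Function.iterate_succ_apply' _ _ _
  have hle (m k : ℕ) : (u m).1 * (u (m + k)).1 = (u (m + k)).1 := by
    induction k with
    | zero => exact (u m).2.1.isIdempotentElem
    | succ k ih =>
      rw [← add_assoc, hu, ← hnext (u (m + k)), ← mul_assoc, ih]
  refine not_exists_orthogonal_seq_of_finite_quasispectrum hA
    (fun n ↦ (u n).1 - (u (n + 1)).1)
    (fun n ↦ (u (n + 1)).2.1.sub_of_mul_eq_right (u n).2.1 (hle n 1))
    (fun n ↦ ?_) fun m n hmn ↦ ?_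
  · rw [hu]
    exact sub_ne_zero.2 (hnext_ne (u n)).symm
  · obtain ⟨k, rfl⟩ := Nat.exists_eq_add_of_lt hmn
    have h1 := hle m (k + 1)
    have h2 := hle m (k + 1 + 1)
    have h3 := hle (m + 1) k
    have h4 := hle (m + 1) (k + 1)
    simp only [show m + 1 + k = m + k + 1 by ring, show m + (k + 1) = m + k + 1 by ring,
      show m + 1 + (k + 1) = m + k + 1 + 1 by ring,
      show m + (k + 1 + 1) = m + k + 1 + 1 by ring] at h1 h2 h3 h4
    simp only [sub_mul, mul_sub, h1, h2, h3, h4, sub_self]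

theorem IsMinimalProjection.exists_mul_mul_eq_smul
    (hA : ∀ a : A, IsSelfAdjoint a → (quasispectrum ℝ a).Finite)
    {e : A} (he : IsMinimalProjection e) (x : A) : ∃ c : ℂ, e * x * e = c • e := by
  have hee : e * e = e := he.isStarProjection.isIdempotentElem
  have hsa : star e = e := he.isStarProjection.isSelfAdjoint
  have real (x : A) (hx : IsSelfAdjoint x) : ∃ c : ℝ, e * x * e = c • e := by
    by_cases h0 : e * x * e = 0
    · exact ⟨0, by rw [h0, zero_smul]⟩
    have hy : IsSelfAdjoint (e * x * e) := by
      rw [IsSelfAdjoint, star_mul, star_mul, hsa, hx.star_eq, mul_assoc]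
    obtain ⟨f, r, hf, hf0, hr, hyf⟩ := hy.exists_spectral_projection (hA _ hy) h0
    have hef : e * f = f := by
      rw [← inv_smul_smul₀ hr f, ← hyf, mul_smul_comm]
      simp only [← mul_assoc, hee]
    have := he.eq_of_mul_eq f hf hf0 hef
    subst this
    exact ⟨r, by rw [← hyf, mul_assoc, mul_assoc, mul_assoc, hee]⟩
  obtain ⟨c, hc⟩ := real (realPart x) (realPart x).2
  obtain ⟨d, hd⟩ := real (imaginaryPart x) (imaginaryPart x).2
  refine ⟨c + Complex.I * d, ?_⟩
  nth_rewrite 1 [← realPart_add_I_smul_imaginaryPart x]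
  rw [mul_add, add_mul, mul_smul_comm, smul_mul_assoc, hc, hd, add_smul, mul_smul,
    Complex.coe_smul, Complex.coe_smul]

theorem IsMinimalProjection.exists_mul_mul_mem_span
    (hA : ∀ a : A, IsSelfAdjoint a → (quasispectrum ℝ a).Finite)
    {e f : A} (he : IsMinimalProjection e) (hf : IsMinimalProjection f) :
    ∃ z : A, ∀ x, e * x * f ∈ Submodule.span ℂ {z} := by
  by_cases h : ∃ x, e * x * f ≠ 0
  · obtain ⟨x, hx⟩ := h
    refine ⟨e * x * f, fun y ↦ ?_⟩
    have hsaf : star f = f := hf.isStarProjection.isSelfAdjoint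
    have hsae : star e = e := he.isStarProjection.isSelfAdjoint
    have hee : e * e = e := he.isStarProjection.isIdempotentElem
    have hff : f * f = f := hf.isStarProjection.isIdempotentElem
    obtain ⟨c, hc⟩ := he.exists_mul_mul_eq_smul hA (x * f * star x)
    obtain ⟨d, hd⟩ := hf.exists_mul_mul_eq_smul hA (star x * e * y)
    have hxx : (e * x * f) * star (e * x * f) = c • e := by
      rw [← hc, star_mul, star_mul, hsaf, hsae]
      simp only [← mul_assoc]
      rw [mul_assoc (e * x) f f, hff]
    have hc0 : c ≠ 0 := by
      rintro rfl
      rw [zero_smul, CStarRing.mul_star_self_eq_zero_iff] at hxx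
      exact hx hxx
    have hxy : star (e * x * f) * (e * y * f) = d • f := by
      rw [← hd, star_mul, star_mul, hsaf, hsae]
      simp only [← mul_assoc]
      rw [mul_assoc (f * star x) e e, hee]
    refine Submodule.mem_span_singleton.2 ⟨c⁻¹ * d, ?_⟩
    have : c • (e * y * f) = d • (e * x * f) := by
      calc c • (e * y * f) = (c • e) * (e * y * f) := by
            rw [smul_mul_assoc, ← mul_assoc, ← mul_assoc, hee]
        _ = (e * x * f) * (star (e * x * f) * (e * y * f)) := by rw [← hxx, mul_assoc]
        _ = d • (e * x * f) := by rw [hxy, mul_smul_comm, mul_assoc, hff]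
    rw [mul_smul, ← this, inv_smul_smul₀ hc0]
  · push Not at h
    exact ⟨0, fun x ↦ by simp [h x]⟩

/-- Induction along orthogonal sums of minimal projections: when all self-adjoint elements have
finite spectrum, the process terminates at a right unit. -/
theorem exists_right_unit_of_isMinimalProjection_induction
    (hA : ∀ a : A, IsSelfAdjoint a → (quasispectrum ℝ a).Finite)
    (P : A → Prop) (h_zero : P 0)
    (h_add : ∀ q e, P q → IsMinimalProjection e → P (q + e)) :
    ∃ q, P q ∧ ∀ x, x * q = x := by
  by_contra! hno
  let T := {q : A // IsStarProjection q ∧ P q}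
  have step (q : T) : ∃ e, IsMinimalProjection e ∧ q.1 * e = 0 := by
    obtain ⟨q, hq, hPq⟩ := q
    obtain ⟨x, hx⟩ := hno q hPq
    have hzq : (x * q - x) * q = 0 := by
      rw [sub_mul, mul_assoc, hq.isIdempotentElem.eq, sub_self]
    have hqz : q * star (x * q - x) = 0 := by
      simpa only [star_mul, star_zero, hq.isSelfAdjoint.star_eq] using congr(star $hzq)
    have hsa := IsSelfAdjoint.star_mul_self (x * q - x)
    obtain ⟨f, r, hf, hf0, hr, hyf⟩ := hsa.exists_spectral_projection (hA _ hsa)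
      (by rw [Ne, CStarRing.star_mul_self_eq_zero_iff]; exact sub_ne_zero.2 hx)
    have hqf : q * f = 0 := by
      rw [← inv_smul_smul₀ hr f, ← hyf, mul_smul_comm, ← mul_assoc, ← mul_assoc, hqz, zero_mul,
        zero_mul, smul_zero]
    obtain ⟨e, he, hfe⟩ := hf.exists_isMinimalProjection hA hf0
    exact ⟨e, he, by rw [← hfe, ← mul_assoc, hqf, zero_mul]⟩
  choose e he hqe using step
  let next : T → T := fun q ↦
    ⟨q.1 + e q, q.2.1.add (he q).isStarProjection (hqe q), h_add _ _ q.2.2 (he q)⟩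
  let u : ℕ → T := fun n ↦ next^[n] ⟨0, .zero A, h_zero⟩
  have hu (n : ℕ) : (u (n + 1)).1 = (u n).1 + e (u n) :=
    congrArg Subtype.val (Function.iterate_succ_apply' next n _)
  have heu (m k : ℕ) : e (u m) * (u (m + k + 1)).1 = e (u m) := by
    have hem := (he (u m)).isStarProjection
    induction k with
    | zero =>
      rw [add_zero, hu, mul_add, hem.isIdempotentElem.eq,
        (u m).2.1.mul_eq_zero_comm hem (hqe (u m)), zero_add]
    | succ k ih =>
      rw [hu, mul_add, ← add_assoc, ih, ← ih, mul_assoc, hqe (u (m + k + 1)), mul_zero, add_zero]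
  refine not_exists_orthogonal_seq_of_finite_quasispectrum hA (fun n ↦ e (u n))
    (fun n ↦ (he _).isStarProjection) (fun n ↦ (he _).ne_zero) fun m n hmn ↦ ?_
  obtain ⟨k, rfl⟩ := Nat.exists_eq_add_of_lt hmn
  rw [← heu m k, mul_assoc, hqe, mul_zero]

theorem finiteDimensional_of_finite_quasispectrum
    (hA : ∀ a : A, IsSelfAdjoint a → (quasispectrum ℝ a).Finite) : FiniteDimensional ℂ A := by
  have left (f : A) (hf : IsMinimalProjection f) :
      ∃ V : Submodule ℂ A, FiniteDimensional ℂ V ∧ ∀ x, x * f ∈ V := by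
    obtain ⟨q, ⟨V, hV, hqV⟩, hq⟩ := exists_right_unit_of_isMinimalProjection_induction hA
      (fun q ↦ ∃ V : Submodule ℂ A, FiniteDimensional ℂ V ∧ ∀ x, star q * x * f ∈ V)
      ⟨⊥, inferInstance, by simp⟩ <| by
        rintro q e ⟨V, hV, hqV⟩ he
        obtain ⟨z, hz⟩ := he.exists_mul_mul_mem_span hA hf
        refine ⟨V ⊔ Submodule.span ℂ {z}, inferInstance, fun x ↦ ?_⟩
        rw [star_add, he.isStarProjection.isSelfAdjoint.star_eq, add_mul, add_mul]
        exact Submodule.add_mem_sup (hqV x) (hz x)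
    refine ⟨V, hV, fun x ↦ ?_⟩
    have hx : star q * x = x := by simpa using congr(star $(hq (star x)))
    simpa only [hx] using hqV x
  obtain ⟨q, ⟨V, hV, hqV⟩, hq⟩ := exists_right_unit_of_isMinimalProjection_induction hA
    (fun q ↦ ∃ V : Submodule ℂ A, FiniteDimensional ℂ V ∧ ∀ x, x * q ∈ V)
    ⟨⊥, inferInstance, by simp⟩ <| by
      rintro q e ⟨V, hV, hqV⟩ he
      obtain ⟨W, hW, heW⟩ := left e he
      refine ⟨V ⊔ W, inferInstance, fun x ↦ ?_⟩
      rw [mul_add]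
      exact Submodule.add_mem_sup (hqV x) (heW x)
  have htop : V = ⊤ := (Submodule.eq_top_iff').2 fun x ↦ hq x ▸ hqV x
  subst htop
  exact Submodule.topEquiv.finiteDimensional

end CStar

/-- A (not necessarily unital) C*-algebra `A ≠ {0}` has the fixed point property for
nonexpansive mappings iff it is finite dimensional over `ℂ`, and both are equivalent to
the finiteness of the spectrum (in the unitization) of every self-adjoint element. -/
theorem cstarAlgebra_hasFPP_iff_finiteDimensional_iff_spectra_finite
    (A : Type*) [NonUnitalCStarAlgebra A] [Nontrivial A] :
    (HasFPP A ↔ FiniteDimensional ℂ A) ∧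
    (HasFPP A ↔ ∀ a : A, IsSelfAdjoint a → (quasispectrum ℂ a).Finite) := by
  have hfin (h : ∀ a : A, IsSelfAdjoint a → (quasispectrum ℂ a).Finite) :
      FiniteDimensional ℂ A :=
    finiteDimensional_of_finite_quasispectrum fun a ha ↦ ha.finite_quasispectrum_iff.1 (h a ha)
  have hspec (h : HasFPP A) (a : A) (ha : IsSelfAdjoint a) : (quasispectrum ℂ a).Finite :=
    ha.finite_quasispectrum_iff.2 (h.finite_real_quasispectrum ha)
  exact ⟨⟨fun h ↦ hfin (hspec h), fun _ ↦ FiniteDimensional.hasFPP A⟩,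
    hspec, fun h ↦ have := hfin h; FiniteDimensional.hasFPP A⟩
end

section
/- If a C*-algebra A has the fixed point property for nonexpansive mappings, then the spectrum of every self-adjoint element of A is finite. -/
/-- The fixed point property is inherited along linear isometries from complete spaces. -/
theorem HasFPP.of_linearIsometry {B A : Type*} [NormedAddCommGroup B] [NormedSpace ℂ B]
    [CompleteSpace B] [NormedAddCommGroup A] [NormedSpace ℂ A] (φ : B →ₗᵢ[ℂ] A)
    (hA : HasFPP A) : HasFPP B := by
  intro K hne hbdd hcl hconv M hM hnonexp
  have hinv : Function.LeftInverse (Function.invFun φ) φ :=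
    Function.leftInverse_invFun φ.injective
  obtain ⟨_, ⟨x, hx, rfl⟩, hfix⟩ := hA (φ '' K) (hne.image _)
    (φ.lipschitz.isBounded_image hbdd)
    (φ.isometry.isClosedEmbedding.isClosedMap K hcl)
    (by
      rintro _ ⟨x, hx, rfl⟩ _ ⟨y, hy, rfl⟩ t h0 h1
      exact ⟨_, hconv x hx y hy t h0 h1, by simp only [map_add, map_smul]⟩)
    (fun z => φ (M (Function.invFun φ z)))
    (by
      rintro _ ⟨x, hx, rfl⟩
      exact ⟨M x, hM hx, by simp only [hinv x]⟩)
    (by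
      rintro _ ⟨x, hx, rfl⟩ _ ⟨y, hy, rfl⟩
      simp only [hinv x, hinv y, ← map_sub, φ.norm_map]
      exact hnonexp x hx y hy)
  exact ⟨x, hx, φ.injective (by simpa only [hinv x] using hfix)⟩

/-- A convex combination of two vectors of norm at most one has norm at most one. -/
theorem norm_convexCombination_le_one {B : Type*} [NormedAddCommGroup B] [NormedSpace ℂ B]
    {x y : B} (hx : ‖x‖ ≤ 1) (hy : ‖y‖ ≤ 1) {t : ℝ} (h0 : 0 ≤ t) (h1 : t ≤ 1) :
    ‖((1 - t : ℝ) : ℂ) • x + ((t : ℝ) : ℂ) • y‖ ≤ 1 := by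
  refine (norm_add_le _ _).trans ?_
  rw [norm_smul, norm_smul, Complex.norm_of_nonneg h0, Complex.norm_of_nonneg (sub_nonneg.2 h1)]
  nlinarith

section ContinuousMapZero

open Topology
open scoped ContinuousMapZero

variable {X : Type*} [MetricSpace X] [Zero X]

/-- A function equal to a constant off an accumulation point takes that value there too. -/
theorem ContinuousMapZero.eq_of_forall_ne {p : X} [(𝓝[≠] p).NeBot] (f : C(X, ℂ)₀) {c : ℂ}
    (h : ∀ x, x ≠ p → f x = c) : f p = c := by
  have h₁ : Filter.Tendsto f (𝓝[≠] p) (𝓝 (f p)) := (map_continuous f).continuousAt.mono_left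
    nhdsWithin_le_nhds
  refine tendsto_nhds_unique h₁ (tendsto_const_nhds.congr' ?_)
  filter_upwards [self_mem_nhdsWithin] with x hx using (h x hx).symm

variable [CompactSpace X]

theorem ContinuousMapZero.norm_le_of_forall {f : C(X, ℂ)₀} {C : ℝ} (hC : 0 ≤ C)
    (h : ∀ x, ‖f x‖ ≤ C) : ‖f‖ ≤ C :=
  (ContinuousMap.norm_le (f : C(X, ℂ)) hC).2 h

theorem ContinuousMapZero.norm_apply_le (f : C(X, ℂ)₀) (x : X) : ‖f x‖ ≤ ‖f‖ :=
  (f : C(X, ℂ)).norm_coe_le_norm x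

/-- If the base point is an accumulation point, the map `f ↦ f + h (1 - f)` on the closed unit
ball, with `h` vanishing only at the base point, has no fixed point. -/
theorem not_hasFPP_continuousMapZero_of_zero [(𝓝[≠] (0 : X)).NeBot] : ¬ HasFPP C(X, ℂ)₀ := by
  intro hFPP
  set r : X → ℝ := fun x => min 1 (dist x 0) with hr
  have hr0 : ∀ x, 0 ≤ r x := fun x => le_min zero_le_one dist_nonneg
  have hr1 : ∀ x, r x ≤ 1 := fun x => min_le_left _ _
  let h : C(X, ℂ)₀ := ⟨⟨fun x => (r x : ℂ), by fun_prop⟩, by simp [hr]⟩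
  have hh : ∀ x, h x = (r x : ℂ) := fun _ => rfl
  have hnorm : ∀ x, ‖(1 : ℂ) - r x‖ = 1 - r x := fun x => by
    rw [← Complex.ofReal_one, ← Complex.ofReal_sub, Complex.norm_of_nonneg (sub_nonneg.2 (hr1 x))]
  obtain ⟨f, -, hf⟩ := hFPP (Metric.closedBall 0 1) ⟨0, by simp⟩ Metric.isBounded_closedBall
    Metric.isClosed_closedBall
    (by
      intro x hx y hy t h0 h1
      rw [mem_closedBall_zero_iff] at *
      exact norm_convexCombination_le_one hx hy h0 h1)
    (fun f => f + (h - h * f))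
    (by
      intro f hf
      rw [mem_closedBall_zero_iff] at *
      refine ContinuousMapZero.norm_le_of_forall zero_le_one fun x => ?_
      have hfx := (f.norm_apply_le x).trans hf
      have := norm_convexCombination_le_one hfx (norm_one (α := ℂ)).le (hr0 x) (hr1 x)
      rw [show (f + (h - h * f)) x
          = ((1 - r x : ℝ) : ℂ) • f x + ((r x : ℝ) : ℂ) • (1 : ℂ) by simp [hh]; ring]
      exact this)
    (by
      intro f _ g _
      refine ContinuousMapZero.norm_le_of_forall (norm_nonneg _) fun x => ?_
      have hfg := (f - g).norm_apply_le x
      have : (f + (h - h * f) - (g + (h - h * g))) x = (1 - (r x : ℂ)) * (f - g) x := by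
        simp [hh]
        ring
      rw [this, norm_mul, hnorm]
      nlinarith [hr0 x, norm_nonneg ((f - g) x)])
  refine zero_ne_one ((map_zero f).symm.trans (f.eq_of_forall_ne (p := 0) (c := 1) fun x hx => ?_))
  have hx' : (r x : ℂ) ≠ 0 := by
    exact_mod_cast (lt_min one_pos (dist_pos.2 hx)).ne'
  have := DFunLike.congr_fun hf x
  simp only [ContinuousMapZero.coe_add, ContinuousMapZero.coe_sub,
    ContinuousMapZero.coe_mul, Pi.add_apply, Pi.sub_apply, Pi.mul_apply, hh] at this
  have h2 : (r x : ℂ) * (1 - f x) = 0 := by linear_combination this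
  exact (sub_eq_zero.1 ((mul_eq_zero.1 h2).resolve_left hx')).symm

/-- If `p` is an accumulation point other than the base point, multiplication by a function
peaking exactly at `p` has no fixed point on the functions in the unit ball with `f p = 1`. -/
theorem not_hasFPP_continuousMapZero_of_ne_zero {p : X} [(𝓝[≠] p).NeBot] (hp : p ≠ 0) :
    ¬ HasFPP C(X, ℂ)₀ := by
  intro hFPP
  have hd : 0 < dist 0 p := dist_pos.2 hp.symm
  set r : X → ℝ := fun x => max 0 (1 - dist x p / dist 0 p) with hr
  have hr0 : ∀ x, 0 ≤ r x := fun x => le_max_left _ _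
  have hr1 : ∀ x, r x ≤ 1 := fun x =>
    max_le zero_le_one (sub_le_self _ (div_nonneg dist_nonneg dist_nonneg))
  let g : C(X, ℂ)₀ := ⟨⟨fun x => (r x : ℂ), by fun_prop⟩, by simp [hr, hd.ne']⟩
  have hg : ∀ x, g x = (r x : ℂ) := fun _ => rfl
  have hgp : g p = 1 := by simp [hg, hr]
  have hg1 : ‖g‖ ≤ 1 := ContinuousMapZero.norm_le_of_forall zero_le_one fun x => by
    rw [hg, Complex.norm_of_nonneg (hr0 x)]
    exact hr1 x
  have hmul : ∀ f : C(X, ℂ)₀, ‖g * f‖ ≤ ‖f‖ := fun f =>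
    (norm_mul_le g f).trans (mul_le_of_le_one_left (norm_nonneg f) hg1)
  have hcont : Continuous fun f : C(X, ℂ)₀ => f p :=
    continuous_eval_const p
  obtain ⟨f, ⟨-, hfp⟩, hf⟩ := hFPP (Metric.closedBall 0 1 ∩ {f | f p = 1})
    ⟨g, by simpa using hg1, hgp⟩
    (Metric.isBounded_closedBall.subset Set.inter_subset_left)
    (Metric.isClosed_closedBall.inter (isClosed_eq hcont continuous_const))
    (by
      rintro x ⟨hx, hxp⟩ y ⟨hy, hyp⟩ t h0 h1
      rw [mem_closedBall_zero_iff] at hx hy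
      refine ⟨mem_closedBall_zero_iff.2 (norm_convexCombination_le_one hx hy h0 h1), ?_⟩
      simp only [Set.mem_ofPred_eq] at hxp hyp
      simp [hxp, hyp])
    (fun f => g * f)
    (by
      rintro f ⟨hf, hfp⟩
      rw [mem_closedBall_zero_iff] at hf
      refine ⟨mem_closedBall_zero_iff.2 ((hmul f).trans hf), ?_⟩
      simp only [Set.mem_ofPred_eq] at hfp
      simp [hfp, hgp])
    (by
      intro f _ g' _
      simpa only [← mul_sub] using hmul (f - g'))
  refine one_ne_zero (hfp.symm.trans (f.eq_of_forall_ne fun x hx => ?_))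
  have hx' : (1 : ℂ) - r x ≠ 0 := by
    have : r x < 1 := max_lt one_pos (sub_lt_self _ (div_pos (dist_pos.2 hx) hd))
    exact_mod_cast (sub_pos.2 this).ne'
  have := DFunLike.congr_fun hf x
  simp only [ContinuousMapZero.coe_mul, Pi.mul_apply, hg] at this
  have h2 : (1 - (r x : ℂ)) * f x = 0 := by linear_combination -this
  exact (mul_eq_zero.1 h2).resolve_left hx'

/-- A pointed compact metric space whose algebra of functions vanishing at the base point has
the fixed point property is finite. -/
theorem finite_of_hasFPP_continuousMapZero (h : HasFPP C(X, ℂ)₀) : Finite X := by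
  suffices DiscreteTopology X from finite_of_compact_of_discrete
  refine discreteTopology_iff_isOpen_singleton.2 fun p => ?_
  by_contra hp
  have : (𝓝[≠] p).NeBot := by
    rwa [isOpen_singleton_iff_punctured_nhds, ← ne_eq, ← Filter.neBot_iff] at hp
  by_cases hp0 : p = 0
  · subst hp0
    exact not_hasFPP_continuousMapZero_of_zero h
  · exact not_hasFPP_continuousMapZero_of_ne_zero hp0 h

/-- The continuous functional calculus of a normal element as a linear isometry. -/
noncomputable def cfcₙLinearIsometry {A : Type*} [NonUnitalCStarAlgebra A] (a : A)
    (ha : IsStarNormal a) : C(quasispectrum ℂ a, ℂ)₀ →ₗᵢ[ℂ] A where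
  toFun := cfcₙHom ha
  map_add' := map_add _
  map_smul' := map_smul _
  norm_map' f := norm_cfcₙHom a f ha

end ContinuousMapZero

/-- If a (not necessarily unital) C*-algebra has the fixed point property for nonexpansive
mappings, then the spectrum (in the unitization) of every self-adjoint element is finite. -/
theorem spectrum_finite_of_hasFPP
    (A : Type*) [NonUnitalCStarAlgebra A] (hFPP : HasFPP A) :
    ∀ a : A, IsSelfAdjoint a → (quasispectrum ℂ a).Finite := by
  intro a ha
  exact finite_of_hasFPP_continuousMapZero
    (hFPP.of_linearIsometry (cfcₙLinearIsometry a ha.isStarNormal))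
end

section
/- If A is a C*-algebra in which the spectrum of every self-adjoint element is finite, then A is finite dimensional as a complex vector space. -/
/-- `q` is a projection strictly below the projection `p`. -/
structure IsProperSubprojection {A : Type*} [Mul A] [Star A] (q p : A) : Prop where
  left : IsStarProjection q
  right : IsStarProjection p
  mul_eq : q * p = q
  ne : q ≠ p

lemma IsStarProjection.mul_eq_of_mul_eq {A : Type*} [Mul A] [StarMul A] {p q : A}
    (hp : IsStarProjection p) (hq : IsStarProjection q) (h : q * p = q) : p * q = q := by
  simpa [hp.isSelfAdjoint.star_eq, hq.isSelfAdjoint.star_eq] using congrArg star h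

lemma IsStarProjection.sub_of_mul_eq {A : Type*} [Ring A] [StarRing A] {p q : A}
    (hp : IsStarProjection p) (hq : IsStarProjection q) (h : q * p = q) :
    IsStarProjection (p - q) := by
  refine ⟨?_, hp.isSelfAdjoint.sub hq.isSelfAdjoint⟩
  have hpp : p * p = p := hp.isIdempotentElem
  have hqq : q * q = q := hq.isIdempotentElem
  simp [IsIdempotentElem, mul_sub, sub_mul, hpp, hqq, h, hp.mul_eq_of_mul_eq hq h]

namespace CStarAlgebra

variable {A : Type*} [CStarAlgebra A]

lemma mem_spectrum_of_mul_eq_smul {a p : A} {c : ℂ} (hp : p ≠ 0) (h : a * p = c • p) :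
    c ∈ spectrum ℂ a := by
  intro hu
  apply hp
  rw [← hu.mul_right_eq_zero (b := p), sub_mul, h, Algebra.algebraMap_eq_smul_one, smul_mul_assoc,
    one_mul, sub_self]

/-- An orthogonal sequence of nonzero projections yields a self-adjoint element
with infinite spectrum. -/
lemma exists_isSelfAdjoint_infinite_spectrum {p : ℕ → A} (hp : ∀ n, IsStarProjection (p n))
    (hne : ∀ n, p n ≠ 0) (horth : ∀ m n, m ≠ n → p m * p n = 0) :
    ∃ a : A, IsSelfAdjoint a ∧ (spectrum ℂ a).Infinite := by
  have hsum : Summable fun n ↦ ((1 / 2 : ℝ) ^ n : ℝ) • p n := by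
    refine Summable.of_norm_bounded (g := fun n ↦ (1 / 2 : ℝ) ^ n) summable_geometric_two fun n ↦ ?_
    rw [norm_smul, Real.norm_of_nonneg (by positivity)]
    exact mul_le_of_le_one_right (by positivity) (IsStarProjection.norm_le _ (hp n))
  refine ⟨∑' n, ((1 / 2 : ℝ) ^ n : ℝ) • p n, ?_, ?_⟩
  · rw [IsSelfAdjoint, tsum_star]
    simp [(hp _).isSelfAdjoint.star_eq]
  · refine Set.infinite_of_injective_forall_mem (f := fun n : ℕ ↦ (((1 / 2 : ℝ) ^ n : ℝ) : ℂ)) ?_ ?_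
    · exact Complex.ofReal_injective.comp (pow_right_injective₀ (by norm_num) (by norm_num))
    · intro m
      refine mem_spectrum_of_mul_eq_smul (hne m) ?_
      rw [← hsum.tsum_mul_right, tsum_eq_single m]
      · rw [smul_mul_assoc, (hp m).isIdempotentElem.eq, Complex.coe_smul]
      · intro n hn
        rw [smul_mul_assoc, horth n m hn, smul_zero]

lemma wellFounded_isProperSubprojection
    (h : ∀ a : A, IsSelfAdjoint a → (spectrum ℂ a).Finite) :
    WellFounded (IsProperSubprojection (A := A)) := by
  rw [wellFounded_iff_isEmpty_descending_chain]
  refine ⟨fun ⟨f, hf⟩ ↦ ?_⟩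
  have hproj n : IsStarProjection (f n) := (hf n).right
  have hle {m n : ℕ} (hmn : m ≤ n) : f n * f m = f n := by
    induction n, hmn using Nat.le_induction with
    | base => exact (hproj m).isIdempotentElem
    | succ n _ ih => rw [← (hf n).mul_eq, mul_assoc, ih]
  have hle' {m n : ℕ} (hmn : m ≤ n) : f m * f n = f n :=
    (hproj m).mul_eq_of_mul_eq (hproj n) (hle hmn)
  obtain ⟨a, ha, hinf⟩ := exists_isSelfAdjoint_infinite_spectrum (p := fun n ↦ f n - f (n + 1))
    (fun n ↦ (hproj n).sub_of_mul_eq (hproj (n + 1)) (hf n).mul_eq)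
    (fun n ↦ sub_ne_zero.mpr (hf n).ne.symm) fun m n hmn ↦ by
      rcases hmn.lt_or_gt with hlt | hlt
      · simp [mul_sub, sub_mul, hle' hlt.le, hle' (Nat.succ_le_of_lt hlt),
          hle' (hlt.le.trans n.le_succ), hle' (Nat.succ_le_succ hlt.le)]
      · simp [mul_sub, sub_mul, hle hlt.le, hle (Nat.succ_le_of_lt hlt),
          hle (hlt.le.trans m.le_succ), hle (Nat.succ_le_succ hlt.le)]
  exact hinf (h a ha)

/-- A self-adjoint element of the corner of a minimal projection `p` is a multiple of `p`. -/
lemma exists_eq_smul_of_isSelfAdjoint {p b : A} (hp : IsStarProjection p)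
    (hmin : ∀ q : A, IsStarProjection q → q * p = q → q = 0 ∨ q = p)
    (hb : IsSelfAdjoint b) (hfin : (spectrum ℂ b).Finite) (hbp : b * p = b) :
    ∃ c : ℂ, b = c • p := by
  classical
  have hn : IsStarNormal b := hb.isStarNormal
  have hcont (f : ℂ → ℂ) : ContinuousOn f (spectrum ℂ b) := hfin.continuousOn f
  by_cases hzero : ∀ z ∈ spectrum ℂ b, z = 0
  · refine ⟨0, ?_⟩
    rw [zero_smul, ← cfc_id' ℂ b, ← cfc_zero ℂ b]
    exact cfc_congr fun z hz ↦ hzero z hz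
  push Not at hzero
  obtain ⟨z, hz, hz0⟩ := hzero
  let f : ℂ → ℂ := Pi.single z 1
  have hfb : cfc f b * b = z • cfc f b := by
    nth_rewrite 2 [← cfc_id' ℂ b]
    rw [← cfc_smul z f b (hcont _), ← cfc_mul f _ b (hcont _) (hcont _)]
    refine cfc_congr fun w _ ↦ ?_
    by_cases hw : w = z <;> simp [f, hw]
  have hproj : IsStarProjection (cfc f b) := by
    refine ⟨?_, ?_⟩
    · rw [IsIdempotentElem, ← cfc_mul f f b (hcont _) (hcont _)]
      refine cfc_congr fun w _ ↦ ?_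
      by_cases hw : w = z <;> simp [f, hw]
    · rw [IsSelfAdjoint, ← cfc_star]
      refine cfc_congr fun w _ ↦ ?_
      by_cases hw : w = z <;> simp [f, hw]
  have hne : cfc f b ≠ 0 := by
    rw [← cfc_zero ℂ b, Ne, cfc_eq_cfc_iff_eqOn hn (hcont _) (hcont _)]
    intro heq
    simpa [f] using heq hz
  have hqp : cfc f b * p = cfc f b := by
    have hq : cfc f b = z⁻¹ • (cfc f b * b) := by rw [hfb, inv_smul_smul₀ hz0]
    rw [hq, smul_mul_assoc, mul_assoc, hbp]
  have heq := (hmin _ hproj hqp).resolve_left hne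
  refine ⟨z, ?_⟩
  rw [← heq, ← hfb, heq]
  simpa [hb.star_eq, hp.isSelfAdjoint.star_eq] using (congrArg star hbp).symm

/-- The corner of a minimal projection is one-dimensional. -/
lemma exists_mul_mul_eq_smul (h : ∀ a : A, IsSelfAdjoint a → (spectrum ℂ a).Finite)
    {p : A} (hp : IsStarProjection p)
    (hmin : ∀ q : A, IsStarProjection q → q * p = q → q = 0 ∨ q = p) (x : A) :
    ∃ c : ℂ, p * x * p = c • p := by
  have key {y : A} (hy : IsSelfAdjoint y) : ∃ c : ℂ, p * y * p = c • p := by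
    have hsa : IsSelfAdjoint (p * y * p) := by
      simpa [hp.isSelfAdjoint.star_eq] using hy.conjugate p
    refine exists_eq_smul_of_isSelfAdjoint hp hmin hsa (h _ hsa) ?_
    rw [mul_assoc, hp.isIdempotentElem.eq]
  obtain ⟨c, hc⟩ := key (realPart x).2
  obtain ⟨d, hd⟩ := key (imaginaryPart x).2
  refine ⟨c + Complex.I * d, ?_⟩
  conv_lhs => rw [← realPart_add_I_smul_imaginaryPart x]
  rw [mul_add, add_mul, mul_smul_comm, smul_mul_assoc, hc, hd, add_smul, mul_smul]

/-- The linear map `x ↦ p * x * q`. -/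
noncomputable def corner (p q : A) : A →ₗ[ℂ] A := LinearMap.mulLeftRight ℂ (p, q)

@[simp]
lemma corner_apply (p q x : A) : corner p q x = p * x * q := rfl

lemma finiteDimensional_range_corner_of_minimal
    (h : ∀ a : A, IsSelfAdjoint a → (spectrum ℂ a).Finite)
    {p q : A} (hp : IsStarProjection p) (hq : IsStarProjection q)
    (hpmin : ∀ r : A, IsStarProjection r → r * p = r → r = 0 ∨ r = p)
    (hqmin : ∀ r : A, IsStarProjection r → r * q = r → r = 0 ∨ r = q) :
    FiniteDimensional ℂ (corner p q).range := by
  by_cases hzero : ∀ x, p * x * q = 0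
  · have : corner p q = 0 := LinearMap.ext hzero
    rw [this, LinearMap.range_zero]
    infer_instance
  push Not at hzero
  obtain ⟨x, hx⟩ := hzero
  have hpp : p * p = p := hp.isIdempotentElem
  have hqq : q * q = q := hq.isIdempotentElem
  have hstar : star (p * x * q) = q * star x * p := by
    simp [hp.isSelfAdjoint.star_eq, hq.isSelfAdjoint.star_eq, mul_assoc]
  obtain ⟨c, hc⟩ := exists_mul_mul_eq_smul h hp hpmin (x * q * star x)
  have hc' : p * x * q * star (p * x * q) = c • p := by
    rw [← hc, hstar]
    simp only [mul_assoc]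
    rw [← mul_assoc q q, hqq]
  have hc0 : c ≠ 0 := by
    rintro rfl
    rw [zero_smul, CStarRing.mul_star_self_eq_zero_iff] at hc'
    exact hx hc'
  have hle : (corner p q).range ≤ Submodule.span ℂ {p * x * q} := by
    rintro _ ⟨y, rfl⟩
    obtain ⟨d, hd⟩ := exists_mul_mul_eq_smul h hq hqmin (star x * p * y)
    have hd' : star (p * x * q) * (p * y * q) = d • q := by
      rw [← hd, hstar]
      simp only [mul_assoc]
      rw [← mul_assoc p p, hpp]
    refine Submodule.mem_span_singleton.mpr ⟨c⁻¹ * d, ?_⟩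
    calc (c⁻¹ * d) • (p * x * q)
        = c⁻¹ • (p * x * q * (d • q)) := by
          rw [mul_smul_comm, mul_assoc _ q q, hqq, mul_smul]
      _ = c⁻¹ • ((c • p) * (p * y * q)) := by simp only [← hd', ← hc', mul_assoc]
      _ = p * y * q := by
          rw [smul_mul_assoc, inv_smul_smul₀ hc0, ← mul_assoc, ← mul_assoc, hpp]
  exact Submodule.finiteDimensional_of_le hle

lemma finiteDimensional_range_corner_add {p p' q q' : A}
    (h₁ : FiniteDimensional ℂ (corner p q).range) (h₂ : FiniteDimensional ℂ (corner p' q').range)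
    {r s : A} (h : ∀ x, r * x * s = p * x * q + p' * x * q') :
    FiniteDimensional ℂ (corner r s).range := by
  have hle : (corner r s).range ≤ (corner p q).range ⊔ (corner p' q').range := by
    rintro _ ⟨x, rfl⟩
    rw [corner_apply, h]
    exact Submodule.add_mem_sup ⟨x, rfl⟩ ⟨x, rfl⟩
  exact Submodule.finiteDimensional_of_le hle

/-- A projection that is not minimal is the sum of two proper subprojections. -/
lemma minimal_or_exists_isProperSubprojection {p : A} (hp : IsStarProjection p) :
    (∀ r : A, IsStarProjection r → r * p = r → r = 0 ∨ r = p) ∨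
      ∃ r, IsProperSubprojection r p ∧ IsProperSubprojection (p - r) p := by
  by_cases hmin : ∀ r : A, IsStarProjection r → r * p = r → r = 0 ∨ r = p
  · exact .inl hmin
  push Not at hmin
  obtain ⟨r, hr, hrp, hr0, hne⟩ := hmin
  refine .inr ⟨r, ⟨hr, hp, hrp, hne⟩, hp.sub_of_mul_eq hr hrp, hp, ?_, by simpa using hr0⟩
  rw [sub_mul, hrp, hp.isIdempotentElem.eq]

lemma finiteDimensional_range_corner (h : ∀ a : A, IsSelfAdjoint a → (spectrum ℂ a).Finite)
    {p q : A} (hp : IsStarProjection p) (hq : IsStarProjection q) :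
    FiniteDimensional ℂ (corner p q).range := by
  have hwf := wellFounded_isProperSubprojection h
  induction p using hwf.induction generalizing q with
  | _ p ihp =>
    rcases minimal_or_exists_isProperSubprojection hp with hpmin | ⟨r, hr, hr'⟩
    · induction q using hwf.induction with
      | _ q ihq =>
        rcases minimal_or_exists_isProperSubprojection hq with hqmin | ⟨r, hr, hr'⟩
        · exact finiteDimensional_range_corner_of_minimal h hp hq hpmin hqmin
        · exact finiteDimensional_range_corner_add (ihq r hr hr.left) (ihq _ hr' hr'.left)
            fun x ↦ by rw [← mul_add, add_sub_cancel]
    · exact finiteDimensional_range_corner_add (ihp r hr hr.left hq) (ihp _ hr' hr'.left hq)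
        fun x ↦ by rw [← add_mul, ← add_mul, add_sub_cancel]

theorem finiteDimensional_of_spectrum_finite
    (h : ∀ a : A, IsSelfAdjoint a → (spectrum ℂ a).Finite) : FiniteDimensional ℂ A := by
  have hfin := finiteDimensional_range_corner h (.one A) (.one A)
  exact .of_surjective (corner (1 : A) 1).range.subtype fun x ↦ ⟨⟨x, x, by simp⟩, rfl⟩

end CStarAlgebra

/-- If `A` is a (not necessarily unital) C*-algebra in which the spectrum (computed in the
unitization) of every self-adjoint element is finite, then `A` is finite dimensional over `ℂ`. -/
theorem finiteDimensional_of_selfAdjoint_spectra_finite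
    (A : Type*) [NonUnitalCStarAlgebra A]
    (h : ∀ a : A, IsSelfAdjoint a → (quasispectrum ℂ a).Finite) :
    FiniteDimensional ℂ A := by
  have hfin : FiniteDimensional ℂ (Unitization ℂ A) := by
    refine CStarAlgebra.finiteDimensional_of_spectrum_finite fun x hx ↦ ?_
    have hsnd : IsSelfAdjoint x.snd := by
      rw [IsSelfAdjoint, ← Unitization.snd_star, hx.star_eq]
    have hx' : x = algebraMap ℂ _ x.fst + (x.snd : Unitization ℂ A) :=
      (Unitization.inl_fst_add_inr_snd_eq x).symm
    rw [hx', ← spectrum.singleton_add_eq, ← Unitization.quasispectrum_eq_spectrum_inr]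
    exact (Set.finite_singleton _).add (h _ hsnd)
  exact FiniteDimensional.of_injective (Unitization.inrHom ℂ ℂ A) Unitization.inr_injective
end

section
/- If S is an infinite compact subset of ℂ, then the C*-algebra C(S) of continuous complex-valued functions on S with the supremum norm does not have the fixed point property for nonexpansive mappings: there exist a nonempty bounded closed convex subset K of C(S) and a nonexpansive map M : K → K with no fixed point. -/
/-- An infinite compact space has a point that is not isolated. -/
theorem exists_not_isOpen_singleton (X : Type*) [TopologicalSpace X] [CompactSpace X]
    [Infinite X] : ∃ p : X, ¬ IsOpen ({p} : Set X) := by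
  by_contra! h
  have := discreteTopology_iff_isOpen_singleton.mpr h
  exact not_finite_iff_infinite.mpr ‹_› (finite_of_compact_of_discrete (X := X))

/-- If `S` is an infinite compact subset of `ℂ`, then the C*-algebra `C(S, ℂ)` of
continuous complex-valued functions on `S` (with the supremum norm) fails the fixed point
property for nonexpansive mappings: there is a nonempty bounded closed convex subset `K`
and a nonexpansive self-map of `K` with no fixed point. -/
theorem continuousMap_not_hasFPP
    (S : Set ℂ) [CompactSpace S] (hS : S.Infinite) :
    ∃ K : Set C(S, ℂ), K.Nonempty ∧ Bornology.IsBounded K ∧ IsClosed K ∧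
      (∀ x ∈ K, ∀ y ∈ K, ∀ t : ℝ, 0 ≤ t → t ≤ 1 →
        ((1 - t : ℝ) : ℂ) • x + ((t : ℝ) : ℂ) • y ∈ K) ∧
      ∃ M : C(S, ℂ) → C(S, ℂ), Set.MapsTo M K K ∧
        (∀ x ∈ K, ∀ y ∈ K, ‖M x - M y‖ ≤ ‖x - y‖) ∧
        ∀ x ∈ K, M x ≠ x := by
  have : Infinite S := hS.to_subtype
  obtain ⟨p, hp⟩ := exists_not_isOpen_singleton S
  have hpos (x : S) : 0 < 1 + dist x p := by positivity
  let g : C(S, ℂ) :=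
    ⟨fun x => (((1 + dist x p)⁻¹ : ℝ) : ℂ), Complex.continuous_ofReal.comp
      (Continuous.inv₀ (by fun_prop) fun x => (hpos x).ne')⟩
  have hg : ‖g‖ ≤ 1 := by
    refine (ContinuousMap.norm_le _ zero_le_one).mpr fun x => ?_
    change ‖(((1 + dist x p)⁻¹ : ℝ) : ℂ)‖ ≤ 1
    rw [Complex.norm_real, Real.norm_of_nonneg (inv_nonneg.mpr (hpos x).le)]
    exact inv_le_one_of_one_le₀ (by linarith [dist_nonneg (x := x) (y := p)])
  have hgp : g p = 1 := by simp [g]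
  have hg_ne (x : S) (hx : x ≠ p) : g x ≠ 1 := by
    intro h
    have h' : (1 + dist x p)⁻¹ = 1 := Complex.ofReal_injective (by simpa [g] using h)
    rw [inv_eq_one] at h'
    exact hx (dist_eq_zero.mp (by linarith))
  have hmul (f : C(S, ℂ)) : ‖g * f‖ ≤ ‖f‖ :=
    (norm_mul_le g f).trans (mul_le_of_le_one_left (norm_nonneg f) hg)
  refine ⟨Metric.closedBall 0 1 ∩ {f | f p = 1}, ⟨1, by simp, rfl⟩,
    Metric.isBounded_closedBall.subset Set.inter_subset_left,
    Metric.isClosed_closedBall.inter (isClosed_eq (by fun_prop) continuous_const),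
    ?_, fun f => g * f, ?_, ?_, ?_⟩
  · rintro x ⟨hx, hxp⟩ y ⟨hy, hyp⟩ t ht₀ ht₁
    refine ⟨?_, ?_⟩
    · have := (convex_closedBall (0 : C(S, ℂ)) 1) hx hy (sub_nonneg.mpr ht₁) ht₀ (by ring)
      simpa only [Complex.coe_smul] using this
    · simp only [Set.mem_ofPred_eq] at hxp hyp
      simp [hxp, hyp]
  · rintro f ⟨hf, hfp⟩
    rw [mem_closedBall_zero_iff] at hf
    refine ⟨mem_closedBall_zero_iff.mpr ((hmul f).trans hf), ?_⟩
    simp only [Set.mem_ofPred_eq] at hfp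
    simp [hfp, hgp]
  · intro x _ y _
    simpa only [mul_sub] using hmul (x - y)
  · rintro f ⟨-, hfp⟩ hfix
    simp only [Set.mem_ofPred_eq] at hfp
    have hf_zero (x : S) (hx : x ≠ p) : f x = 0 := by
      by_contra h
      exact hg_ne x hx ((mul_eq_right₀ h).mp (DFunLike.congr_fun hfix x))
    have hsupp : ({p} : Set S) = f ⁻¹' {0}ᶜ := by
      ext x
      by_cases hx : x = p
      · simp [hx, hfp]
      · simp [hx, hf_zero x hx]
    exact hp (hsupp ▸ isOpen_compl_singleton.preimage f.continuous)
end

section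
/- Let S be an infinite compact subset of ℂ, let p ∈ S be a limit point of S, let K = {A ∈ C(S) : ‖A‖ ≤ 1 and A(p) = 1}, and let B ∈ K satisfy |B(s)| < 1 for all s ∈ S with s ≠ p. Then K is a nonempty bounded closed convex subset of C(S), the map M_B : K → K defined by M_B(A) = B·A (pointwise product) is well-defined and nonexpansive, and M_B has no fixed point in K. -/
/-- Goebel's example: let `S` be an infinite compact subset of `ℂ`, let `p ∈ S` be a limit
point of `S`, let `K = {A ∈ C(S, ℂ) : ‖A‖ ≤ 1 ∧ A p = 1}`, and let `B ∈ K` satisfy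
`|B s| < 1` for all `s ≠ p`.  Then `K` is a nonempty bounded closed convex set, the map
`A ↦ B * A` (pointwise product) maps `K` into itself and is nonexpansive, and it has no
fixed point in `K`. -/
theorem goebel_multiplication_map_no_fixed_point
    (S : Set ℂ) [CompactSpace S] (hS : S.Infinite)
    (p : S) (hp : AccPt (p : ℂ) (Filter.principal S))
    (K : Set C(S, ℂ)) (hK : K = {A : C(S, ℂ) | ‖A‖ ≤ 1 ∧ A p = 1})
    (B : C(S, ℂ)) (hB : B ∈ K) (hBlt : ∀ s : S, s ≠ p → ‖B s‖ < 1) :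
    K.Nonempty ∧ Bornology.IsBounded K ∧ IsClosed K ∧
      (∀ x ∈ K, ∀ y ∈ K, ∀ t : ℝ, 0 ≤ t → t ≤ 1 →
        ((1 - t : ℝ) : ℂ) • x + ((t : ℝ) : ℂ) • y ∈ K) ∧
      (∀ A ∈ K, B * A ∈ K) ∧
      (∀ A ∈ K, ∀ A' ∈ K, ‖B * A - B * A'‖ ≤ ‖A - A'‖) ∧
      ∀ A ∈ K, B * A ≠ A := by
  subst hK
  have nonexpansive (A A' : C(S, ℂ)) : ‖B * A - B * A'‖ ≤ ‖A - A'‖ := by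
    rw [← mul_sub]
    exact (norm_mul_le _ _).trans (mul_le_of_le_one_left (norm_nonneg _) hB.1)
  refine ⟨⟨B, hB⟩, ?_, ?_, ?_, ?_, fun A _ A' _ => nonexpansive A A', ?_⟩
  · exact isBounded_iff_forall_norm_le.2 ⟨1, fun A hA => hA.1⟩
  · exact (isClosed_le continuous_norm continuous_const).inter
      (isClosed_eq (continuous_eval_const p) continuous_const)
  · rintro x ⟨hx, hxp⟩ y ⟨hy, hyp⟩ t ht0 ht1
    refine ⟨(norm_add_le _ _).trans ?_, by simp [hxp, hyp]⟩
    rw [norm_smul, norm_smul, Complex.norm_of_nonneg (sub_nonneg.2 ht1),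
      Complex.norm_of_nonneg ht0]
    nlinarith
  · rintro A ⟨hA, hAp⟩
    exact ⟨(norm_mul_le _ _).trans (mul_le_one₀ hB.1 (norm_nonneg _) hA), by simp [hAp, hB.2]⟩
  · rintro A ⟨-, hAp⟩ hfix
    obtain ⟨U, hU, hUA⟩ := isOpen_induced_iff.1 (isOpen_ne_fun A.continuous continuous_zero)
    have mem_U (s : S) : (s : ℂ) ∈ U ↔ A s ≠ 0 := Set.ext_iff.1 hUA s
    obtain ⟨z, ⟨hzU, hzS⟩, hzp⟩ :=
      accPt_iff_nhds.1 hp U (hU.mem_nhds ((mem_U p).2 (by simp [hAp])))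
    have hB_one : B ⟨z, hzS⟩ = 1 :=
      (mul_eq_right₀ ((mem_U ⟨z, hzS⟩).1 hzU)).1 (DFunLike.congr_fun hfix ⟨z, hzS⟩)
    have hlt := hBlt ⟨z, hzS⟩ fun h => hzp (congrArg Subtype.val h)
    simp [hB_one] at hlt
end

section
/- Let A be a C*-algebra in which the spectrum of every self-adjoint element is finite. Then there is no strictly increasing sequence of projections (P_n)_{n∈ℕ} in A (with P_n ≤ P_{n+1} and P_n ≠ P_{n+1} for all n), and likewise no strictly decreasing sequence of projections. -/
/-- A nonzero eigenvalue, witnessed by left multiplication, lies in the quasispectrum. -/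
theorem mem_quasispectrum_of_mul_eq_smul_s10 {𝕜 A : Type*} [Field 𝕜] [NonUnitalRing A] [Module 𝕜 A]
    [IsScalarTower 𝕜 A A] {a q : A} {r : 𝕜} (hr : r ≠ 0) (hq : q ≠ 0) (haq : a * q = r • q) :
    r ∈ quasispectrum 𝕜 a := by
  refine quasispectrum.mem_of_not_quasiregular a (r := Units.mk0 r hr) fun hreg => hq ?_
  obtain ⟨y, -, hy⟩ := isQuasiregular_iff.mp hreg
  set x : A := -((Units.mk0 r hr)⁻¹ • a) with hx
  have hxq : x * q = -q := by
    rw [hx, neg_mul, smul_mul_assoc, haq, Units.smul_def, smul_smul]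
    simp [hr]
  have hzero := congrArg (· * q) hy
  simpa [add_mul, mul_assoc, hxq] using hzero

/-- If self-adjoint elements have finite quasispectrum, there is no sequence of nonzero, pairwise
orthogonal projections. -/
theorem not_exists_orthogonal_projections {A : Type*} [NonUnitalCStarAlgebra A]
    (h : ∀ a : A, IsSelfAdjoint a → (quasispectrum ℂ a).Finite) (q : ℕ → A)
    (hsa : ∀ n, IsSelfAdjoint (q n)) (hidem : ∀ n, q n * q n = q n) (hne : ∀ n, q n ≠ 0)
    (horth : ∀ m n, m < n → q m * q n = 0) : False := by
  have horth' : ∀ m n, m ≠ n → q m * q n = 0 := fun m n hmn => by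
    rcases lt_or_gt_of_ne hmn with hlt | hlt
    · exact horth m n hlt
    · simpa [(hsa m).star_eq, (hsa n).star_eq] using congrArg star (horth n m hlt)
  have hnorm : ∀ n, ‖q n‖ = 1 := fun n => by
    have hmul := CStarRing.norm_star_mul_self (x := q n)
    rw [(hsa n).star_eq, hidem n] at hmul
    exact (mul_eq_left₀ (norm_ne_zero_iff.mpr (hne n))).mp hmul.symm
  let c : ℕ → ℝ := fun n => (1 / 2) ^ n
  have hsum : Summable fun n => c n • q n := by
    refine Summable.of_norm ?_
    simpa [norm_smul, hnorm, c] using summable_geometric_two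
  have hmul : ∀ n, (∑' m, c m • q m) * q n = (c n : ℂ) • q n := fun n => by
    rw [← hsum.tsum_mul_right, tsum_eq_single n, smul_mul_assoc, hidem, Complex.coe_smul]
    intro m hmn
    rw [smul_mul_assoc, horth' m n hmn, smul_zero]
  have hself : IsSelfAdjoint (∑' m, c m • q m) := by
    rw [IsSelfAdjoint, tsum_star]
    simp [(hsa _).star_eq]
  have hinj : Function.Injective fun n => (c n : ℂ) :=
    Complex.ofReal_injective.comp (pow_right_injective₀ (by norm_num) (by norm_num))
  refine Set.infinite_of_injective_forall_mem hinj (fun n => ?_) (h _ hself)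
  exact mem_quasispectrum_of_mul_eq_smul_s10 (by simp [c]) (hne n) (hmul n)

/-- For a sequence in which each term is fixed by multiplication with its successor, each term is
fixed by multiplication with every later term. -/
theorem mul_eq_left_of_le {A : Type*} [Semigroup A] {P : ℕ → A}
    (hidem : ∀ n, P n * P n = P n)
    (hsucc : ∀ n, P n * P (n + 1) = P n) {m n : ℕ} (hmn : m ≤ n) : P m * P n = P m := by
  induction n, hmn using Nat.le_induction with
  | base => exact hidem m
  | succ n _ ih => rw [← ih, mul_assoc, hsucc]

/-- For a sequence in which multiplication by each term fixes its successor, multiplication by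
each term fixes every later term. -/
theorem mul_eq_right_of_le {A : Type*} [Semigroup A] {P : ℕ → A}
    (hidem : ∀ n, P n * P n = P n)
    (hsucc : ∀ n, P n * P (n + 1) = P (n + 1)) {m n : ℕ} (hmn : m ≤ n) : P m * P n = P n := by
  induction n, hmn using Nat.le_induction with
  | base => exact hidem m
  | succ n _ ih => rw [← hsucc n, ← mul_assoc, ih]

/-- In a C*-algebra in which every self-adjoint element has finite spectrum (in the
unitization), there is no strictly increasing sequence of projections (for the order
`P ≤ Q ↔ PQ = QP = P`), and no strictly decreasing one. -/
theorem no_strictly_monotone_sequence_of_projections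
    {A : Type*} [NonUnitalCStarAlgebra A]
    (h : ∀ a : A, IsSelfAdjoint a → (quasispectrum ℂ a).Finite) :
    (¬ ∃ P : ℕ → A, (∀ n, IsSelfAdjoint (P n) ∧ P n * P n = P n) ∧
      ∀ n, (P n * P (n + 1) = P n ∧ P (n + 1) * P n = P n) ∧ P n ≠ P (n + 1)) ∧
    (¬ ∃ P : ℕ → A, (∀ n, IsSelfAdjoint (P n) ∧ P n * P n = P n) ∧
      ∀ n, (P (n + 1) * P n = P (n + 1) ∧ P n * P (n + 1) = P (n + 1)) ∧ P n ≠ P (n + 1)) := by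
  constructor
  · rintro ⟨P, hP, hstep⟩
    have hle {m n : ℕ} (hmn : m ≤ n) : P m * P n = P m :=
      mul_eq_left_of_le (fun n => (hP n).2) (fun n => (hstep n).1.1) hmn
    refine not_exists_orthogonal_projections h (fun n => P (n + 1) - P n)
      (fun n => (hP (n + 1)).1.sub (hP n).1) (fun n => ?_)
      (fun n => sub_ne_zero.mpr (hstep n).2.symm) (fun m n hmn => ?_)
    · simp [sub_mul, mul_sub, (hP _).2, (hstep n).1.1, (hstep n).1.2]
    · simp [sub_mul, mul_sub, hle (show m + 1 ≤ n + 1 by lia), hle (show m + 1 ≤ n by lia),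
        hle (show m ≤ n + 1 by lia), hle hmn.le]
  · rintro ⟨P, hP, hstep⟩
    have hle {m n : ℕ} (hmn : m ≤ n) : P m * P n = P n :=
      mul_eq_right_of_le (fun n => (hP n).2) (fun n => (hstep n).1.2) hmn
    refine not_exists_orthogonal_projections h (fun n => P n - P (n + 1))
      (fun n => (hP n).1.sub (hP (n + 1)).1) (fun n => ?_)
      (fun n => sub_ne_zero.mpr (hstep n).2) (fun m n hmn => ?_)
    · simp [sub_mul, mul_sub, (hP _).2, (hstep n).1.1, (hstep n).1.2]
    · simp [sub_mul, mul_sub, hle (show m + 1 ≤ n + 1 by lia), hle (show m + 1 ≤ n by lia),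
        hle (show m ≤ n + 1 by lia), hle hmn.le]
end

section
/- Let A be a C*-algebra in which the spectrum of every self-adjoint element is finite. Then every nonzero projection P in A can be written as P = P₁ + ⋯ + P_d for some d ∈ ℕ, where P₁, …, P_d are nonzero pairwise orthogonal minimal projections in A. -/
/-- Strict order on star projections: `R < P` iff `R ≠ P` and `RP = PR = R`. -/
def StarProjectionLT {A : Type*} [NonUnitalCStarAlgebra A] (R P : A) : Prop :=
  IsStarProjection R ∧ IsStarProjection P ∧ R ≠ P ∧ R * P = R ∧ P * R = R

/-- An eigenvalue with respect to left multiplication lies in the quasispectrum. -/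
lemma mem_quasispectrum_of_mul_eq_smul_s13 {A : Type*} [NonUnitalCStarAlgebra A]
    {a x : A} {c : ℂ} (hx : x ≠ 0) (hax : a * x = c • x) : c ∈ quasispectrum ℂ a := by
  rw [Unitization.quasispectrum_eq_spectrum_inr' ℂ ℂ a, spectrum.mem_iff]
  intro hu
  have hmul : (algebraMap ℂ (Unitization ℂ A) c - (a : Unitization ℂ A)) *
      (x : Unitization ℂ A) = 0 := by
    rw [sub_mul, ← Algebra.smul_def, ← Unitization.inr_mul, hax, Unitization.inr_smul, sub_self]
  rw [hu.mul_right_eq_zero] at hmul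
  exact hx (Unitization.inr_injective (R := ℂ) (by simpa using hmul))

/-- An infinite sequence of nonzero pairwise orthogonal projections yields a self-adjoint element
with infinite quasispectrum. -/
lemma exists_isSelfAdjoint_infinite_quasispectrum {A : Type*} [NonUnitalCStarAlgebra A]
    (D : ℕ → A) (hD : ∀ n, IsStarProjection (D n)) (hD0 : ∀ n, D n ≠ 0)
    (horth : ∀ m n, m ≠ n → D m * D n = 0) :
    ∃ a : A, IsSelfAdjoint a ∧ (quasispectrum ℂ a).Infinite := by
  have hsum : Summable fun n => ((1 / 2 : ℝ) ^ n) • D n := by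
    refine Summable.of_norm_bounded summable_geometric_two fun n => ?_
    rw [norm_smul, Real.norm_of_nonneg (by positivity)]
    exact mul_le_of_le_one_right (by positivity) (hD n).norm_le
  refine ⟨∑' n, ((1 / 2 : ℝ) ^ n) • D n, ?_, ?_⟩
  · rw [IsSelfAdjoint, tsum_star]
    exact tsum_congr fun n => by rw [star_smul, star_trivial, (hD n).isSelfAdjoint.star_eq]
  · refine Set.infinite_of_injective_forall_mem (f := fun n : ℕ => (((1 / 2 : ℝ) ^ n : ℝ) : ℂ))
      ?_ fun m => mem_quasispectrum_of_mul_eq_smul_s13 (hD0 m) ?_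
    · exact Complex.ofReal_injective.comp
        (pow_right_injective₀ (by norm_num) (by norm_num))
    · rw [← hsum.tsum_mul_right, tsum_eq_single m]
      · rw [smul_mul_assoc, (hD m).isIdempotentElem.eq, Complex.coe_smul]
      · intro n hn
        rw [smul_mul_assoc, horth n m hn, smul_zero]

lemma StarProjectionLT.isStarProjection_sub {A : Type*} [NonUnitalCStarAlgebra A] {R P : A}
    (hRP : StarProjectionLT R P) : IsStarProjection (P - R) := by
  obtain ⟨hR, hP, -, h₁, h₂⟩ := hRP
  refine ⟨?_, hP.isSelfAdjoint.sub hR.isSelfAdjoint⟩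
  rw [IsIdempotentElem, mul_sub, sub_mul, sub_mul, h₁, h₂, hP.isIdempotentElem.eq,
    hR.isIdempotentElem.eq, sub_self, sub_zero]

lemma wellFounded_starProjectionLT {A : Type*} [NonUnitalCStarAlgebra A]
    (h : ∀ a : A, IsSelfAdjoint a → (quasispectrum ℂ a).Finite) :
    WellFounded (StarProjectionLT (A := A)) := by
  rw [wellFounded_iff_isEmpty_descending_chain]
  refine ⟨fun ⟨f, hf⟩ => ?_⟩
  have hle : ∀ m n, m ≤ n → f n * f m = f n ∧ f m * f n = f n := by
    intro m n hmn
    induction n, hmn using Nat.le_induction with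
    | base => exact ⟨(hf m).2.1.isIdempotentElem, (hf m).2.1.isIdempotentElem⟩
    | succ n _ ih =>
      obtain ⟨-, -, -, h₁, h₂⟩ := hf n
      constructor
      · rw [← h₁, mul_assoc, ih.1]
      · rw [← h₂, ← mul_assoc, ih.2]
  obtain ⟨a, ha, hinf⟩ := exists_isSelfAdjoint_infinite_quasispectrum
    (fun n => f n - f (n + 1)) (fun n => (hf n).isStarProjection_sub)
    (fun n => sub_ne_zero.2 (hf n).2.2.1.symm) (by
      intro m n hmn
      rcases lt_or_gt_of_ne hmn with hlt | hlt
      · rw [mul_sub, sub_mul, sub_mul, (hle m n (by lia)).2, (hle (m + 1) n (by lia)).2,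
          (hle m (n + 1) (by lia)).2, (hle (m + 1) (n + 1) (by lia)).2, sub_self, sub_self,
          sub_self]
      · rw [mul_sub, sub_mul, sub_mul, (hle n m (by lia)).1, (hle (n + 1) m (by lia)).1,
          (hle n (m + 1) (by lia)).1, (hle (n + 1) (m + 1) (by lia)).1, sub_self])
  exact hinf (h a ha)

/-- A summand of a finite orthogonal sum of projections lies below the sum. -/
lemma mul_sum_eq_self_of_pairwise_orthogonal {A : Type*} [NonUnitalCStarAlgebra A] {s : Finset A}
    (hs : ∀ x ∈ s, IsStarProjection x) (horth : ∀ x ∈ s, ∀ y ∈ s, x ≠ y → x * y = 0)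
    {x : A} (hx : x ∈ s) : x * ∑ y ∈ s, y = x ∧ (∑ y ∈ s, y) * x = x := by
  rw [Finset.mul_sum, Finset.sum_mul]
  constructor
  · rw [Finset.sum_eq_single_of_mem x hx fun y hy hyx => horth x hx y hy hyx.symm]
    exact (hs x hx).isIdempotentElem
  · rw [Finset.sum_eq_single_of_mem x hx fun y hy hyx => horth y hy x hx hyx]
    exact (hs x hx).isIdempotentElem

lemma exists_finset_minimal_projections {A : Type*} [NonUnitalCStarAlgebra A]
    (h : ∀ a : A, IsSelfAdjoint a → (quasispectrum ℂ a).Finite)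
    (P : A) (hP : IsStarProjection P) (hP0 : P ≠ 0) :
    ∃ s : Finset A, (∀ x ∈ s, IsStarProjection x) ∧ (∀ x ∈ s, x ≠ 0) ∧
      (∀ x ∈ s, ∀ y ∈ s, x ≠ y → x * y = 0) ∧
      (∀ x ∈ s, ∀ R : A, IsStarProjection R → R ≠ 0 → R * x = R → x * R = R → R = x) ∧
      P = ∑ x ∈ s, x := by
  classical
  induction P using (wellFounded_starProjectionLT h).induction with
  | _ P ih =>
  by_cases hmin : ∀ R : A, IsStarProjection R → R ≠ 0 → R * P = R → P * R = R → R = P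
  · refine ⟨{P}, ?_⟩
    simp only [Finset.mem_singleton, forall_eq, Finset.sum_singleton]
    exact ⟨hP, hP0, fun hne => absurd rfl hne, hmin, trivial⟩
  · push Not at hmin
    obtain ⟨R, hR, hR0, h₁, h₂, hne⟩ := hmin
    have hRP : StarProjectionLT R P := ⟨hR, hP, hne, h₁, h₂⟩
    have hsub := hRP.isStarProjection_sub
    have hsubP : StarProjectionLT (P - R) P := by
      refine ⟨hsub, hP, fun heq => hR0 (sub_eq_self.1 heq), ?_, ?_⟩
      · rw [sub_mul, h₁, hP.isIdempotentElem.eq]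
      · rw [mul_sub, h₂, hP.isIdempotentElem.eq]
    obtain ⟨s, hs, hs0, hso, hsm, hsum⟩ := ih R hRP hR hR0
    obtain ⟨t, ht, ht0, hto, htm, htsum⟩ := ih (P - R) hsubP hsub (sub_ne_zero.2 hne.symm)
    have hcross : ∀ x ∈ s, ∀ y ∈ t, x * y = 0 ∧ y * x = 0 := by
      intro x hx y hy
      have hxR := mul_sum_eq_self_of_pairwise_orthogonal hs hso hx
      have hyR := mul_sum_eq_self_of_pairwise_orthogonal ht hto hy
      rw [← hsum] at hxR
      rw [← htsum] at hyR
      constructor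
      · rw [← hxR.1, ← hyR.2, mul_assoc, ← mul_assoc R, mul_sub, h₁,
          hR.isIdempotentElem.eq, sub_self, zero_mul, mul_zero]
      · rw [← hxR.2, ← hyR.1, mul_assoc, ← mul_assoc (P - R), sub_mul, h₂,
          hR.isIdempotentElem.eq, sub_self, zero_mul, mul_zero]
    have hdisj : Disjoint s t := Finset.disjoint_left.2 fun x hx hx' =>
      hs0 x hx ((hs x hx).isIdempotentElem.eq.symm.trans (hcross x hx x hx').1)
    refine ⟨s ∪ t, ?_, ?_, ?_, ?_, ?_⟩
    · exact fun x hx => (Finset.mem_union.1 hx).elim (hs x) (ht x)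
    · exact fun x hx => (Finset.mem_union.1 hx).elim (hs0 x) (ht0 x)
    · intro x hx y hy hxy
      rcases Finset.mem_union.1 hx with hx | hx <;> rcases Finset.mem_union.1 hy with hy | hy
      · exact hso x hx y hy hxy
      · exact (hcross x hx y hy).1
      · exact (hcross y hy x hx).2
      · exact hto x hx y hy hxy
    · exact fun x hx => (Finset.mem_union.1 hx).elim (hsm x) (htm x)
    · rw [Finset.sum_union hdisj, ← hsum, ← htsum, add_sub_cancel]

/-- In a C*-algebra in which every self-adjoint element has finite spectrum (in the
unitization), every nonzero projection is a finite sum of nonzero pairwise orthogonal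
minimal projections (minimality being with respect to the order `P ≤ Q ↔ PQ = QP = P`). -/
theorem projection_eq_sum_of_minimal_projections
    {A : Type*} [NonUnitalCStarAlgebra A]
    (h : ∀ a : A, IsSelfAdjoint a → (quasispectrum ℂ a).Finite)
    (P : A) (hP : IsSelfAdjoint P ∧ P * P = P) (hP0 : P ≠ 0) :
    ∃ (d : ℕ) (Q : Fin d → A),
      (∀ j, IsSelfAdjoint (Q j) ∧ Q j * Q j = Q j ∧ Q j ≠ 0) ∧
      (∀ i j, i ≠ j → Q i * Q j = 0 ∧ Q j * Q i = 0) ∧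
      -- each `Q j` is minimal
      (∀ j, ∀ R : A, (IsSelfAdjoint R ∧ R * R = R) → R ≠ 0 →
        (R * Q j = R ∧ Q j * R = R) → R = Q j) ∧
      P = ∑ j, Q j := by
  obtain ⟨s, hs, hs0, hso, hsm, hsum⟩ :=
    exists_finset_minimal_projections h P ⟨hP.2, hP.1⟩ hP0
  let e := s.equivFin.symm
  have hne : ∀ i j, i ≠ j → (e i : A) ≠ e j := fun i j hij heq =>
    hij (e.injective (Subtype.ext heq))
  refine ⟨s.card, fun j => e j, fun j => ?_, fun i j hij => ?_, fun j R hR hR0 hRj => ?_, ?_⟩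
  · exact ⟨(hs _ (e j).2).isSelfAdjoint, (hs _ (e j).2).isIdempotentElem, hs0 _ (e j).2⟩
  · exact ⟨hso _ (e i).2 _ (e j).2 (hne i j hij), hso _ (e j).2 _ (e i).2 (hne j i hij.symm)⟩
  · exact hsm _ (e j).2 R ⟨hR.2, hR.1⟩ hR0 hRj.1 hRj.2
  · rw [hsum, e.sum_comp fun x : s => (x : A)]
    exact (Finset.sum_coe_sort s fun x => x).symm
end

section
/- Let A be a C*-algebra in which the spectrum of every self-adjoint element is finite, and let P be a minimal projection in A. Then for every a ∈ A there exists a scalar c ∈ ℂ such that P·a·P = c·P; equivalently, the complex vector space P·A·P = {P a P : a ∈ A} is one-dimensional, spanned by P. -/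
/-- If a nonzero normal element has finite quasispectrum, then some nonzero projection `e`
satisfies `b * e = e * b = c • e` for a nonzero scalar `c`. -/
lemma exists_spectral_projection {A : Type*} [NonUnitalCStarAlgebra A] {b : A}
    (hb : IsStarNormal b) (hfin : (quasispectrum ℂ b).Finite) (hb0 : b ≠ 0) :
    ∃ (e : A) (c : ℂ), IsSelfAdjoint e ∧ e * e = e ∧ e ≠ 0 ∧ c ≠ 0 ∧
      b * e = c • e ∧ e * b = c • e := by
  obtain ⟨c, hc, hc0⟩ : ∃ c ∈ quasispectrum ℂ b, c ≠ 0 := by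
    by_contra! hzero
    refine hb0 ?_
    rw [← cfcₙ_id' ℂ b, cfcₙ_congr (g := fun _ ↦ 0) (fun x hx ↦ hzero x hx), cfcₙ_const_zero]
  have hcont (f : ℂ → ℂ) : ContinuousOn f (quasispectrum ℂ b) := hfin.continuousOn f
  let f : ℂ → ℂ := Pi.single c 1
  have hf0 : f 0 = 0 := Pi.single_eq_of_ne hc0.symm 1
  have hfc : f c = 1 := Pi.single_eq_same c 1
  have hf (x : ℂ) : x = c ∧ f x = 1 ∨ f x = 0 := by
    by_cases hx : x = c
    · exact .inl ⟨hx, hx ▸ hfc⟩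
    · exact .inr (Pi.single_eq_of_ne hx 1)
  have hmul : b * cfcₙ f b = c • cfcₙ f b := by
    nth_rewrite 1 [← cfcₙ_id' ℂ b]
    rw [← cfcₙ_mul _ _ b (hcont _) rfl (hcont _) hf0, ← cfcₙ_const_mul c f b (hcont _) hf0]
    congr 1
    ext1 x
    rcases hf x with ⟨rfl, -⟩ | hx <;> simp [*]
  have hcomm : Commute b (cfcₙ f b) := by
    simpa only [cfcₙ_id' ℂ b] using cfcₙ_commute_cfcₙ (fun x : ℂ ↦ x) f b
  refine ⟨cfcₙ f b, c, ?_, ?_, fun he ↦ ?_, hc0, hmul, hcomm.eq ▸ hmul⟩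
  · rw [IsSelfAdjoint, ← cfcₙ_star]
    congr 1
    ext1 x
    rcases hf x with ⟨-, hx⟩ | hx <;> simp [hx]
  · rw [← cfcₙ_mul f f b (hcont _) hf0 (hcont _) hf0]
    congr 1
    ext1 x
    rcases hf x with ⟨-, hx⟩ | hx <;> simp [hx]
  · rw [← cfcₙ_const_zero ℂ b] at he
    have := eqOn_of_cfcₙ_eq_cfcₙ he hb (hcont _) hf0 (hcont _) rfl hc
    simp [hfc] at this

/-- In a C*-algebra in which every self-adjoint element has finite spectrum (in the
unitization), if `P` is a minimal projection then every `P * a * P` is a scalar multiple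
of `P`; equivalently, the subspace `P·A·P` is one-dimensional, spanned by `P`. -/
theorem minimal_projection_corner_one_dimensional
    {A : Type*} [NonUnitalCStarAlgebra A]
    (h : ∀ a : A, IsSelfAdjoint a → (quasispectrum ℂ a).Finite)
    (P : A) (hP : IsSelfAdjoint P ∧ P * P = P) (hP0 : P ≠ 0)
    (hmin : ∀ Q : A, (IsSelfAdjoint Q ∧ Q * Q = Q) → Q ≠ 0 →
      (Q * P = Q ∧ P * Q = Q) → Q = P) :
    (∀ a : A, ∃ c : ℂ, P * a * P = c • P) ∧
    Module.rank ℂ ↥(Submodule.span ℂ {x : A | ∃ a : A, x = P * a * P}) = 1 := by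
  have hPPx (x : A) : P * (P * x) = P * x := by rw [← mul_assoc, hP.2]
  have corner_selfAdjoint (a : A) (ha : IsSelfAdjoint a) : ∃ c : ℂ, P * a * P = c • P := by
    have hb : IsSelfAdjoint (P * a * P) := by
      simpa only [hP.1.star_eq] using ha.conjugate P
    rcases eq_or_ne (P * a * P) 0 with hb0 | hb0
    · exact ⟨0, by rw [hb0, zero_smul]⟩
    obtain ⟨e, c, he, hee, he0, hc0, hbe, heb⟩ :=
      exists_spectral_projection hb.isStarNormal (h _ hb) hb0
    have hPe : P * e = e := by
      rw [← inv_smul_smul₀ hc0 e, ← hbe, mul_smul_comm]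
      simp only [mul_assoc, hPPx]
    have heP : e * P = e := by
      rw [← inv_smul_smul₀ hc0 e, ← heb, smul_mul_assoc]
      simp only [mul_assoc, hP.2]
    rw [hmin e ⟨he, hee⟩ he0 ⟨heP, hPe⟩, mul_assoc, hP.2] at hbe
    exact ⟨c, hbe⟩
  have corner (a : A) : ∃ c : ℂ, P * a * P = c • P := by
    obtain ⟨r, hr⟩ := corner_selfAdjoint _ (realPart a).2
    obtain ⟨s, hs⟩ := corner_selfAdjoint _ (imaginaryPart a).2
    refine ⟨r + Complex.I * s, ?_⟩
    rw [← realPart_add_I_smul_imaginaryPart a, mul_add, add_mul, hr, mul_smul_comm,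
      smul_mul_assoc, hs, smul_smul, add_smul]
  refine ⟨corner, ?_⟩
  have hspan : Submodule.span ℂ {x : A | ∃ a : A, x = P * a * P} = ℂ ∙ P := by
    refine le_antisymm (Submodule.span_le.2 ?_) (Submodule.span_mono ?_)
    · rintro _ ⟨a, rfl⟩
      obtain ⟨c, hc⟩ := corner a
      exact Submodule.mem_span_singleton.2 ⟨c, hc.symm⟩
    · exact Set.singleton_subset_iff.2 ⟨P, by simp only [hP.2]⟩
  rw [hspan, rank_submodule_eq_one_iff]
  exact ⟨P, Submodule.mem_span_singleton_self P, hP0, le_rfl⟩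
end

section
/- Let A be a C*-algebra in which the spectrum of every self-adjoint element is finite, and let P and Q be minimal projections in A. Then the complex vector space Q·A·P = {Q a P : a ∈ A} has dimension 0 or 1. -/
/-- In a C*-algebra, a self-adjoint element with finite spectrum which is supported on a minimal
projection `P` is a scalar multiple of `P`. -/
theorem IsSelfAdjoint.exists_eq_smul_of_minimal_projection
    {A : Type*} [NonUnitalCStarAlgebra A] {a P : A} (ha : IsSelfAdjoint a)
    (hfin : (quasispectrum ℂ a).Finite)
    (hPmin : ∀ R : A, (IsSelfAdjoint R ∧ R * R = R) → R ≠ 0 →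
      (R * P = R ∧ P * R = R) → R = P)
    (haP : a * P = a) (hPa : P * a = a) : ∃ c : ℂ, a = c • P := by
  have hn : IsStarNormal a := ha.isStarNormal
  by_cases hσ : ∃ l ∈ quasispectrum ℂ a, l ≠ 0
  · obtain ⟨l, hl, hl0⟩ := hσ
    classical
    let f : ℂ → ℂ := fun z => if z = l then 1 else 0
    have hf0 : f 0 = 0 := if_neg hl0.symm
    have hfc : ContinuousOn f (quasispectrum ℂ a) := hfin.continuousOn f
    have hsa : IsSelfAdjoint (cfcₙ f a) := by
      rw [IsSelfAdjoint, ← cfcₙ_star]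
      congr 1
      ext z
      by_cases hz : z = l <;> simp [f, hz]
    have hidem : cfcₙ f a * cfcₙ f a = cfcₙ f a := by
      rw [← cfcₙ_mul f f a hfc hf0 hfc hf0]
      congr 1
      ext z
      simp [f]
    have hmul : a * cfcₙ f a = l • cfcₙ f a := by
      conv_lhs => enter [1]; rw [← cfcₙ_id' ℂ a]
      rw [← cfcₙ_mul (fun z => z) f a continuousOn_id rfl hfc hf0, ← cfcₙ_smul l f a hfc hf0]
      congr 1
      ext z
      by_cases hz : z = l <;> simp [f, hz]
    have hne : cfcₙ f a ≠ 0 := by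
      intro h0
      have heq : (quasispectrum ℂ a).EqOn f 0 :=
        eqOn_of_cfcₙ_eq_cfcₙ (h0.trans (cfcₙ_zero ℂ a).symm) hn hfc hf0
      simpa [f] using heq hl
    have hPR : P * cfcₙ f a = cfcₙ f a := by
      have : l • (P * cfcₙ f a) = l • cfcₙ f a := by
        rw [← mul_smul_comm, ← hmul, ← mul_assoc, hPa]
      exact smul_right_injective A hl0 this
    have hcomm : cfcₙ f a * a = a * cfcₙ f a := by
      simpa only [cfcₙ_id ℂ a] using (cfcₙ_commute_cfcₙ f id a).eq
    have hRP : cfcₙ f a * P = cfcₙ f a := by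
      have : l • (cfcₙ f a * P) = l • cfcₙ f a := by
        rw [← smul_mul_assoc, ← hmul, ← hcomm, mul_assoc, haP]
      exact smul_right_injective A hl0 this
    have hR : cfcₙ f a = P := hPmin _ ⟨hsa, hidem⟩ hne ⟨hRP, hPR⟩
    exact ⟨l, by rw [hR, haP] at hmul; exact hmul⟩
  · push Not at hσ
    refine ⟨0, ?_⟩
    rw [zero_smul]
    exact CFC.eq_zero_of_quasispectrum_eq_zero (R := ℂ) a hσ

/-- If self-adjoint elements have finite spectrum, then the corner of a minimal projection `P`
consists of the scalar multiples of `P`. -/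
theorem exists_eq_smul_of_minimal_projection
    {A : Type*} [NonUnitalCStarAlgebra A]
    (h : ∀ a : A, IsSelfAdjoint a → (quasispectrum ℂ a).Finite) {b P : A}
    (hP : IsSelfAdjoint P)
    (hPmin : ∀ R : A, (IsSelfAdjoint R ∧ R * R = R) → R ≠ 0 →
      (R * P = R ∧ P * R = R) → R = P)
    (hbP : b * P = b) (hPb : P * b = b) : ∃ c : ℂ, b = c • P := by
  have hsP : star b * P = star b := by simpa [hP.star_eq] using congrArg star hPb
  have hPs : P * star b = star b := by simpa [hP.star_eq] using congrArg star hbP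
  have key : ∀ a : A, IsSelfAdjoint a → a * P = a → P * a = a → ∃ c : ℂ, a = c • P :=
    fun a ha h₁ h₂ => ha.exists_eq_smul_of_minimal_projection (h a ha) hPmin h₁ h₂
  obtain ⟨c, hc⟩ := key (realPart b) (realPart b).2
    (by simp [realPart_apply_coe, add_mul, smul_mul_assoc, hbP, hsP])
    (by simp [realPart_apply_coe, mul_add, mul_smul_comm, hPb, hPs])
  obtain ⟨d, hd⟩ := key (imaginaryPart b) (imaginaryPart b).2
    (by simp [imaginaryPart_apply_coe, sub_mul, smul_mul_assoc, hbP, hsP])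
    (by simp [imaginaryPart_apply_coe, mul_sub, mul_smul_comm, hPb, hPs])
  refine ⟨c + Complex.I * d, ?_⟩
  rw [← realPart_add_I_smul_imaginaryPart b, hc, hd, smul_smul, ← add_smul]

/-- In a C*-algebra in which every self-adjoint element has finite spectrum (in the
unitization), if `P` and `Q` are minimal projections then the subspace
`Q·A·P = {Q a P : a ∈ A}` has dimension `0` or `1`. -/
theorem corner_between_minimal_projections_rank_le_one
    {A : Type*} [NonUnitalCStarAlgebra A]
    (h : ∀ a : A, IsSelfAdjoint a → (quasispectrum ℂ a).Finite)
    (P Q : A)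
    (hP : IsSelfAdjoint P ∧ P * P = P) (hP0 : P ≠ 0)
    (hPmin : ∀ R : A, (IsSelfAdjoint R ∧ R * R = R) → R ≠ 0 →
      (R * P = R ∧ P * R = R) → R = P)
    (hQ : IsSelfAdjoint Q ∧ Q * Q = Q) (hQ0 : Q ≠ 0)
    (hQmin : ∀ R : A, (IsSelfAdjoint R ∧ R * R = R) → R ≠ 0 →
      (R * Q = R ∧ Q * R = R) → R = Q) :
    Module.rank ℂ ↥(Submodule.span ℂ {x : A | ∃ a : A, x = Q * a * P}) ≤ 1 := by
  set S := Submodule.span ℂ {x : A | ∃ a : A, x = Q * a * P}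
  have hS : ∀ x ∈ S, Q * x = x ∧ x * P = x := by
    intro x hx
    induction hx using Submodule.span_induction with
    | mem x hx =>
      obtain ⟨a, rfl⟩ := hx
      exact ⟨by rw [← mul_assoc, ← mul_assoc, hQ.2], by rw [mul_assoc, hP.2]⟩
    | zero => simp
    | add x y _ _ hx hy => simp [mul_add, add_mul, hx, hy]
    | smul c x _ hx => simp [mul_smul_comm, smul_mul_assoc, hx]
  rw [rank_submodule_le_one_iff]
  by_cases hne : ∃ x ∈ S, x ≠ 0
  · obtain ⟨x, hx, hx0⟩ := hne
    refine ⟨x, hx, fun y hy => ?_⟩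
    obtain ⟨hQx, hxP⟩ := hS x hx
    obtain ⟨hQy, hyP⟩ := hS y hy
    have hPs : P * star x = star x := by simpa [hP.1.star_eq] using congrArg star hxP
    have hsQ : star x * Q = star x := by simpa [hQ.1.star_eq] using congrArg star hQx
    obtain ⟨c, hc⟩ := exists_eq_smul_of_minimal_projection h (b := star x * x) hP.1 hPmin
      (by rw [mul_assoc, hxP]) (by rw [← mul_assoc, hPs])
    obtain ⟨e, he⟩ := exists_eq_smul_of_minimal_projection h (b := y * star x) hQ.1 hQmin
      (by rw [mul_assoc, hsQ]) (by rw [← mul_assoc, hQy])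
    have hc0 : c ≠ 0 := by
      rintro rfl
      rw [zero_smul, CStarRing.star_mul_self_eq_zero_iff] at hc
      exact hx0 hc
    have hyx : c • y = e • x := by
      calc c • y = y * (star x * x) := by rw [hc, mul_smul_comm, hyP]
        _ = e • x := by rw [← mul_assoc, he, smul_mul_assoc, hQx]
    refine Submodule.mem_span_singleton.2 ⟨c⁻¹ * e, ?_⟩
    rw [mul_smul, ← hyx, inv_smul_smul₀ hc0]
  · push Not at hne
    exact ⟨0, S.zero_mem, fun y hy => by rw [hne y hy]; exact Submodule.zero_mem _⟩
end

section
/- Let A be a unital C*-algebra in which the spectrum of every self-adjoint element is finite, and suppose the unit decomposes as 1 = P₁ + ⋯ + P_d, where P₁, …, P_d are pairwise orthogonal minimal projections in A. Then the complex dimension of A is at most d². -/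
/-- In a unital C*-algebra whose self-adjoint elements have finite spectrum, a self-adjoint
element of the corner of a minimal projection `p` is a scalar multiple of `p`. -/
theorem exists_eq_smul_of_isSelfAdjoint_of_minimal {A : Type*} [CStarAlgebra A]
    (h : ∀ a : A, IsSelfAdjoint a → (spectrum ℂ a).Finite) {p : A}
    (hmin : ∀ R : A, (IsSelfAdjoint R ∧ R * R = R) → R ≠ 0 → (R * p = R ∧ p * R = R) → R = p)
    {a : A} (ha : IsSelfAdjoint a) (hap : a * p = a) (hpa : p * a = a) :
    ∃ c : ℂ, a = c • p := by
  classical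
  have hn : IsStarNormal a := ha.isStarNormal
  have hfin := h a ha
  have hcont (f : ℂ → ℂ) : ContinuousOn f (spectrum ℂ a) := hfin.continuousOn f
  by_cases hz : ∀ z ∈ spectrum ℂ a, z = 0
  · refine ⟨0, ?_⟩
    have h0 : cfc (id : ℂ → ℂ) a = cfc (0 : ℂ → ℂ) a := cfc_congr fun z hz' => hz z hz'
    rw [cfc_id ℂ a] at h0
    rw [h0, zero_smul]
    exact cfc_zero ℂ a
  push Not at hz
  obtain ⟨c, hc, hc0⟩ := hz
  set f : ℂ → ℂ := fun z => if z = c then 1 else 0 with hf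
  set g : ℂ → ℂ := fun z => if z = c then c⁻¹ else 0 with hg
  have hmul_id (u v w : ℂ → ℂ) (huv : ∀ z, u z * v z = w z) :
      cfc u a * cfc v a = cfc w a := by
    rw [← cfc_mul u v a (hcont u) (hcont v)]
    exact cfc_congr fun z _ => huv z
  have hsa : IsSelfAdjoint (cfc f a) := by
    rw [IsSelfAdjoint, ← cfc_star]
    exact cfc_congr fun z _ => by simp only [hf]; split_ifs <;> simp
  have hff : cfc f a * cfc f a = cfc f a := hmul_id _ _ _ fun z => by
    simp only [hf]; split_ifs <;> simp
  have hga : cfc g a * a = cfc f a := by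
    have := hmul_id g id f fun z => by
      simp only [hf, hg, id]; split_ifs with hzc <;> simp [hzc, hc0]
    rwa [cfc_id ℂ a] at this
  have hag : a * cfc g a = cfc f a := by
    have := hmul_id id g f fun z => by
      simp only [hf, hg, id]; split_ifs with hzc <;> simp [hzc, hc0]
    rwa [cfc_id ℂ a] at this
  have haf : a * cfc f a = c • cfc f a := by
    have := hmul_id id f (fun z => c • f z) fun z => by
      simp only [hf, id]; split_ifs with hzc <;> simp [hzc]
    rwa [cfc_id ℂ a, cfc_smul c f a (hcont f)] at this
  have hne : cfc f a ≠ 0 := by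
    intro h0
    rw [← cfc_zero ℂ a, cfc_eq_cfc_iff_eqOn hn (hcont _) (hcont _)] at h0
    simpa [hf] using h0 hc
  have hfp : cfc f a = p := by
    refine hmin _ ⟨hsa, hff⟩ hne ⟨?_, ?_⟩
    · rw [← hga, mul_assoc, hap]
    · rw [← hag, ← mul_assoc, hpa]
  exact ⟨c, by rwa [hfp, hap] at haf⟩

/-- In a unital C*-algebra whose self-adjoint elements have finite spectrum, the corner of a
minimal projection `p` is `ℂ p`. -/
theorem exists_eq_smul_of_minimal {A : Type*} [CStarAlgebra A]
    (h : ∀ a : A, IsSelfAdjoint a → (spectrum ℂ a).Finite) {p : A} (hp : IsSelfAdjoint p)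
    (hmin : ∀ R : A, (IsSelfAdjoint R ∧ R * R = R) → R ≠ 0 → (R * p = R ∧ p * R = R) → R = p)
    {a : A} (hap : a * p = a) (hpa : p * a = a) :
    ∃ c : ℂ, a = c • p := by
  have hap' : star a * p = star a := by simpa [hp.star_eq] using congrArg star hpa
  have hpa' : p * star a = star a := by simpa [hp.star_eq] using congrArg star hap
  obtain ⟨c, hc⟩ := exists_eq_smul_of_isSelfAdjoint_of_minimal h hmin (realPart a).2
    (by simp [realPart_apply_coe, add_mul, hap, hap'])
    (by simp [realPart_apply_coe, mul_add, hpa, hpa'])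
  obtain ⟨c', hc'⟩ := exists_eq_smul_of_isSelfAdjoint_of_minimal h hmin (imaginaryPart a).2
    (by simp [imaginaryPart_apply_coe, sub_mul, hap, hap'])
    (by simp [imaginaryPart_apply_coe, mul_sub, hpa, hpa'])
  refine ⟨c + Complex.I * c', ?_⟩
  rw [add_smul, mul_smul, ← hc, ← hc', realPart_add_I_smul_imaginaryPart]

/-- In a unital C*-algebra whose self-adjoint elements have finite spectrum, `p A q` is at most
one-dimensional when `p` and `q` are minimal projections. -/
theorem exists_forall_mul_mul_eq_smul_of_minimal {A : Type*} [CStarAlgebra A]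
    (h : ∀ a : A, IsSelfAdjoint a → (spectrum ℂ a).Finite) {p q : A}
    (hp : IsSelfAdjoint p) (hpp : p * p = p)
    (hpmin : ∀ R : A, (IsSelfAdjoint R ∧ R * R = R) → R ≠ 0 → (R * p = R ∧ p * R = R) → R = p)
    (hq : IsSelfAdjoint q) (hqq : q * q = q)
    (hqmin : ∀ R : A, (IsSelfAdjoint R ∧ R * R = R) → R ≠ 0 → (R * q = R ∧ q * R = R) → R = q) :
    ∃ e : A, ∀ a : A, ∃ c : ℂ, p * a * q = c • e := by
  by_cases h0 : ∀ a : A, p * a * q = 0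
  · exact ⟨0, fun a => ⟨0, by simp [h0 a]⟩⟩
  push Not at h0
  obtain ⟨b, hb⟩ := h0
  set x := p * b * q with hx
  have hxq : x * q = x := by rw [hx, mul_assoc, hqq]
  have hpx : p * x = x := by rw [hx, ← mul_assoc, ← mul_assoc, hpp]
  have hxp' : star x * p = star x := by simpa [hp.star_eq] using congrArg star hpx
  have hqx' : q * star x = star x := by simpa [hq.star_eq] using congrArg star hxq
  obtain ⟨c, hc⟩ := exists_eq_smul_of_minimal h hq hqmin (a := star x * x)
    (by rw [mul_assoc, hxq]) (by rw [← mul_assoc, hqx'])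
  have hc0 : c ≠ 0 := by
    rintro rfl
    rw [zero_smul] at hc
    exact hb (CStarRing.star_mul_self_eq_zero_iff x |>.1 hc)
  refine ⟨x, fun a => ?_⟩
  obtain ⟨c', hc'⟩ := exists_eq_smul_of_minimal h hp hpmin (a := p * a * q * star x)
    (by rw [mul_assoc, hxp']) (by simp only [← mul_assoc, hpp])
  refine ⟨c⁻¹ * c', ?_⟩
  have key : c • (p * a * q) = c' • x := by
    calc c • (p * a * q) = p * a * q * (c • q) := by rw [mul_smul_comm, mul_assoc _ q q, hqq]
      _ = p * a * q * star x * x := by rw [← hc, ← mul_assoc]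
      _ = c' • x := by rw [hc', smul_mul_assoc, hpx]
  rw [mul_smul, ← key, inv_smul_smul₀ hc0]

/-- If `A` is a unital C*-algebra in which every self-adjoint element has finite spectrum
and the unit is a sum `1 = P₁ + ⋯ + P_d` of pairwise orthogonal minimal projections, then
`dim_ℂ A ≤ d²`. -/
theorem rank_le_sq_of_unit_eq_sum_minimal_projections
    {A : Type*} [CStarAlgebra A]
    (h : ∀ a : A, IsSelfAdjoint a → (spectrum ℂ a).Finite)
    (d : ℕ) (P : Fin d → A)
    (hproj : ∀ j, IsSelfAdjoint (P j) ∧ P j * P j = P j)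
    (horth : ∀ i j, i ≠ j → P i * P j = 0 ∧ P j * P i = 0)
    (hmin : ∀ j, P j ≠ 0 ∧ ∀ R : A, (IsSelfAdjoint R ∧ R * R = R) → R ≠ 0 →
      (R * P j = R ∧ P j * R = R) → R = P j)
    (hsum : (1 : A) = ∑ j, P j) :
    Module.rank ℂ A ≤ (d ^ 2 : ℕ) := by
  choose e c hc using fun i j => exists_forall_mul_mul_eq_smul_of_minimal h
    (hproj i).1 (hproj i).2 (hmin i).2 (hproj j).1 (hproj j).2 (hmin j).2
  have hspan : Submodule.span ℂ (Set.range fun ij : Fin d × Fin d => e ij.1 ij.2) = ⊤ := by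
    refine eq_top_iff.2 fun a _ => ?_
    have ha : a = ∑ i, ∑ j, P i * a * P j := by
      simp_rw [← Finset.mul_sum, ← hsum, mul_one, ← Finset.sum_mul, ← hsum, one_mul]
    rw [ha]
    refine Submodule.sum_mem _ fun i _ => Submodule.sum_mem _ fun j _ => ?_
    rw [hc i j a]
    exact Submodule.smul_mem _ _ (Submodule.subset_span ⟨(i, j), rfl⟩)
  rw [← rank_top ℂ A, ← hspan]
  refine (rank_span_le _).trans ?_
  have hcard := Cardinal.mk_range_le_lift (f := fun ij : Fin d × Fin d => e ij.1 ij.2)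
  simpa [sq] using hcard
end
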